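/- arXiv:2504.04885 — 2 statements merged into one kernel-verified Lean document; each statement's English description precedes it below -/
import Mathlib

section
/- For every a ∈ ℕ^{d+1}, on 𝒯_0 one has the commutation relation gray↷_a ∘ M_loc = M_loc ∘ ( Σ_{k∈ℕ^{d+1}} (1/k!) gray↷_{a−k,k} ), where terms with a−k ∉ ℕ^{d+1} are set to zero and both sides take values in the space of (possibly infinite) formal linear combinations of decorated trees. -/
noncomputable section
open scoped BigOperators
attribute [local instance] Classical.propDecidable

namespace Flow

/-- Multi-indices in `ℕ^{d+1}`. -/
abbrev Multi (d : ℕ) := Fin (d + 1) → ℕ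

/-- `k! = ∏ᵢ (kᵢ)!`. -/
def mfact {d : ℕ} (k : Multi d) : ℕ := ∏ i, (k i).factorial

/-- multinomial binomial coefficient `binom(k,j) = ∏ᵢ binom(kᵢ,jᵢ)`. -/
def mbinom {d : ℕ} (k j : Multi d) : ℕ := ∏ i, (k i).choose (j i)

/-- `|k|_𝔰` for the parabolic scaling `𝔰 = (λ,1,…,1)`. -/
def sNorm {d : ℕ} (lam : ℝ) (k : Multi d) : ℝ :=
  lam * (k 0 : ℝ) + ∑ i, (if i = (0 : Fin (d + 1)) then 0 else (k i : ℝ))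

/-- Planar representatives of decorated rooted trees.  A node carries:
`noise` (the presence of a noise-type edge `Ξ` at this node, i.e. the symbol `ζ_l`),
`grayNoise` (a grey noise symbol `grayΞ`), a polynomial decoration `X^k`, a marker `Y^𝔳`,
and a list of branches.  A branch is either `Sum.inl ((isPrime, a), t)`,
an integration edge `ℐ_a` (`isPrime = false`) or `ℐ'_a` (`isPrime = true`) with subtree `t`,
or `Sum.inr (a, k)`, a grey integration leaf `grayℐ_a(X^k)`. -/
inductive Tree (d : ℕ) : Type where
  | node (noise grayNoise : Bool) (k : Multi d) (v : Bool)
      (bs : List (((Bool × Multi d) × Tree d) ⊕ (Multi d × Multi d)))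

abbrev Branch (d : ℕ) := ((Bool × Multi d) × Tree d) ⊕ (Multi d × Multi d)

namespace Tree

variable {d : ℕ}

def intB (a : Multi d) (t : Tree d) : Branch d := Sum.inl ((false, a), t)
def intPB (a : Multi d) (t : Tree d) : Branch d := Sum.inl ((true, a), t)
def grayB (a k : Multi d) : Branch d := Sum.inr (a, k)

def atom (l g : Bool) (k : Multi d) (v : Bool) : Tree d := .node l g k v []
/-- `𝟏·Y^𝔳`. -/
def one (v : Bool) : Tree d := atom false false 0 v
/-- `Ξ·Y^𝔳`. -/
def xi (v : Bool) : Tree d := atom true false 0 v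
/-- `X^k`. -/
def poly (k : Multi d) : Tree d := atom false false k false
/-- the planted tree `ℐ_a(t)`. -/
def plantI (a : Multi d) (t : Tree d) : Tree d := .node false false 0 false [intB a t]
/-- the planted tree `ℐ'_a(t)`. -/
def plantIP (a : Multi d) (t : Tree d) : Tree d := .node false false 0 false [intPB a t]
/-- the planted grey tree `grayℐ_a(X^k)`. -/
def plantG (a k : Multi d) : Tree d := .node false false 0 false [grayB a k]

/-- Tree product: identification of the roots, adding the decorations. -/
def mul : Tree d → Tree d → Tree d
  | .node l g k v bs, .node l' g' k' v' bs' =>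
      .node (l || l') (g || g') (k + k') (v || v') (bs ++ bs')

/-- `ζ_l Y^𝔳 ∏ᵢ ℐ_{aᵢ}(τᵢ)`. -/
def mk0 (l : Bool) (v : Bool) (bs : List (Multi d × Tree d)) : Tree d :=
  .node l false 0 v (bs.map fun p => intB p.1 p.2)

/-- `ζ_l X^k Y^𝔳 ∏ᵢ ℐ_{aᵢ}(τᵢ)`. -/
def mkX (l : Bool) (k : Multi d) (v : Bool) (bs : List (Multi d × Tree d)) : Tree d :=
  .node l false k v (bs.map fun p => intB p.1 p.2)

end Tree

namespace Tree
variable {d : ℕ}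

/-- Lift of a relation on trees to branches: equality of edge labels plus the
relation on subtrees. -/
def BRel (r : Tree d → Tree d → Prop) : Branch d → Branch d → Prop
  | Sum.inl ((p, a), t), Sum.inl ((p', a'), t') => p = p' ∧ a = a' ∧ r t t'
  | Sum.inr x, Sum.inr y => x = y
  | _, _ => False

/-- Fuelled version of non-planar equality of decorated trees. -/
def TEquivN : ℕ → Tree d → Tree d → Prop
  | 0, _, _ => False
  | n + 1, .node l g k v bs, .node l' g' k' v' bs' =>
      l = l' ∧ g = g' ∧ k = k' ∧ v = v' ∧
        ∃ e : Fin bs.length ≃ Fin bs'.length,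
          ∀ i : Fin bs.length, BRel (TEquivN n) (bs.get i) (bs'.get (e i))

/-- Two planar trees represent the same non-planar decorated tree. -/
def TEquiv (t t' : Tree d) : Prop := ∃ n, TEquivN n t t'

end Tree

/-- Non-planar decorated trees. -/
abbrev QTree (d : ℕ) := Quot (@Tree.TEquiv d)

/-- The class of a planar representative. -/
def qk {d : ℕ} (t : Tree d) : QTree d := Quot.mk _ t

/-- A choice of planar representative. -/
def qout {d : ℕ} (c : QTree d) : Tree d := (Quot.exists_rep c).choose

namespace Tree

variable {d : ℕ}

/-- Fuelled symmetry factor. -/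
def SfacN : ℕ → Tree d → ℕ
  | 0, _ => 1
  | n + 1, .node _ _ k _ bs =>
      mfact k *
        Nat.card {e : Equiv.Perm (Fin bs.length) //
          ∀ i, BRel TEquiv (bs.get (e i)) (bs.get i)} *
        (bs.map fun b => match b with
          | Sum.inl (_, t) => SfacN n t
          | Sum.inr _ => 1).prod

/-- The symmetry factor `S(τ)`. -/
def Sfac (t : Tree d) : ℕ := SfacN (sizeOf t) t

/-- Fuelled degree. -/
def degN (α lam : ℝ) : ℕ → Tree d → ℝ
  | 0, _ => 0
  | n + 1, .node l _ k _ bs =>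
      (if l then α else 0) + sNorm lam k +
        (bs.map fun b => match b with
          | Sum.inl ((p, a), t) => degN α lam n t + (if p then 0 else lam) - sNorm lam a
          | Sum.inr _ => 0).sum

/-- The degree of a decorated tree (`α` is the regularity of the noise,
`lam` the order `λ` of the operator). -/
def deg (α lam : ℝ) (t : Tree d) : ℝ := degN α lam (sizeOf t) t

/-- Fuelled number of `ℐ'`-edges. -/
def primeCountN : ℕ → Tree d → ℕ
  | 0, _ => 0
  | n + 1, .node _ _ _ _ bs =>
      (bs.map fun b => match b with
        | Sum.inl ((p, _), t) => (if p then 1 else 0) + primeCountN n t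
        | Sum.inr _ => 0).sum

def primeCount (t : Tree d) : ℕ := primeCountN (sizeOf t) t

/-- Fuelled shape predicate; the flags allow polynomial decorations, grey
decorations and `ℐ'`-edges respectively. -/
def ShapeN (aP aG aPr : Bool) : ℕ → Tree d → Prop
  | 0, _ => False
  | n + 1, .node _ g k _ bs =>
      (aG = true ∨ g = false) ∧ (aP = true ∨ k = 0) ∧
        ∀ b ∈ bs,
          (∃ p a t, b = Sum.inl ((p, a), t) ∧ (aPr = true ∨ p = false) ∧
              ShapeN aP aG aPr n t) ∨
            (aG = true ∧ ∃ x, b = Sum.inr x)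

def Shape (aP aG aPr : Bool) (t : Tree d) : Prop := ∃ n, ShapeN aP aG aPr n t

/-- `T_0`: only `ℐ`- and `Ξ`-edges, trivial polynomial decorations. -/
def IsT0 (t : Tree d) : Prop := Shape false false false t
/-- `T_0^X`: polynomial decorations allowed. -/
def IsT0X (t : Tree d) : Prop := Shape true false false t
/-- `T_0^𝔤`: grey decorations allowed. -/
def IsT0g (t : Tree d) : Prop := Shape false true false t
/-- `T_0^{X,𝔤}`. -/
def IsT0Xg (t : Tree d) : Prop := Shape true true false t
/-- `T_1`: at most one `ℐ'`-edge. -/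
def IsT1 (t : Tree d) : Prop := Shape false false true t ∧ primeCount t ≤ 1
/-- `T_1^X`. -/
def IsT1X (t : Tree d) : Prop := Shape true false true t ∧ primeCount t ≤ 1

/-- Fuelled predicate: every node carries the marker `Y^{v₀}`. -/
def VAllN (v0 : Bool) : ℕ → Tree d → Prop
  | 0, _ => False
  | n + 1, .node _ _ _ v bs =>
      v = v0 ∧ ∀ b ∈ bs, ∀ pa t, b = Sum.inl (pa, t) → VAllN v0 n t

def VAll (v0 : Bool) (t : Tree d) : Prop := ∃ n, VAllN v0 n t

/-- Fuelled predicate: all edge decorations are `0`. -/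
def Dec0N : ℕ → Tree d → Prop
  | 0, _ => False
  | n + 1, .node _ _ _ _ bs =>
      ∀ b ∈ bs, ∀ pa t, b = Sum.inl (pa, t) → (pa.2 = (0 : Multi d) ∧ Dec0N n t)

def Dec0 (t : Tree d) : Prop := ∃ n, Dec0N n t

/-- Fuelled predicate: the tree contains a grey symbol. -/
def hasGrayN : ℕ → Tree d → Prop
  | 0, _ => False
  | n + 1, .node _ g _ _ bs =>
      g = true ∨ ∃ b ∈ bs,
        (∃ x, b = Sum.inr x) ∨ (∃ pa t, b = Sum.inl (pa, t) ∧ hasGrayN n t)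

def HasGray (t : Tree d) : Prop := ∃ n, hasGrayN n t

/-- Fuelled inverse of the grey decorations (`graydown`): erase `grayΞ`,
transfer the polynomial of each grey edge to the node decoration. -/
def graydownN : ℕ → Tree d → Tree d
  | 0, t => t
  | n + 1, .node l _ k v bs =>
      .node l false
        (k + (bs.map fun b => match b with
          | Sum.inr (_, kk) => kk
          | _ => 0).sum) v
        (bs.filterMap fun b => match b with
          | Sum.inl ((p, a), t) => some (Sum.inl ((p, a), graydownN n t))
          | Sum.inr _ => none)

def graydown (t : Tree d) : Tree d := graydownN (sizeOf t) t

end Tree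

/-! ### Formal linear combinations of decorated trees -/

/-- A (possibly infinite) formal linear combination of non-planar decorated trees. -/
abbrev Ser (d : ℕ) := QTree d → ℝ

/-- A formal linear combination of tensor products of decorated trees. -/
abbrev Ser2 (d : ℕ) := QTree d × QTree d → ℝ

/-- The basis element given by a planar tree. -/
def dqT {d : ℕ} (t : Tree d) : Ser d := fun x => if x = qk t then 1 else 0

/-- The basis element given by a class. -/
def dqC {d : ℕ} (c : QTree d) : Ser d := fun x => if x = c then 1 else 0

/-- The basis element `s ⊗ t`. -/
def dq2 {d : ℕ} (s t : Tree d) : Ser2 d := fun x => if x = (qk s, qk t) then 1 else 0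

/-- Linear extension of a tree-indexed family of series to series. -/
def extT {d : ℕ} (F : QTree d → Ser d) (S : Ser d) : Ser d :=
  fun x => ∑ᶠ c : QTree d, S c * F c x

/-- Linear extension, with values in tensors. -/
def extS2 {d : ℕ} (F : QTree d → Ser2 d) (S : Ser d) : Ser2 d :=
  fun x => ∑ᶠ c : QTree d, S c * F c x

/-- Apply linear maps in each tensor slot. -/
def ap2 {d : ℕ} (F G : QTree d → Ser d) (S : Ser2 d) : Ser2 d :=
  fun x => ∑ᶠ p : QTree d × QTree d, S p * F p.1 x.1 * G p.2 x.2

/-- `(id ⊗ f)` for a map `f` on planar trees. -/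
def mapSnd {d : ℕ} (f : Tree d → Tree d) (S : Ser2 d) : Ser2 d :=
  fun x => ∑ᶠ p : QTree d × QTree d,
    S p * (if x.1 = p.1 ∧ x.2 = qk (f (qout p.2)) then 1 else 0)

/-- `(f ⊗ id)` for a map `f` on planar trees. -/
def mapFst {d : ℕ} (f : Tree d → Tree d) (S : Ser2 d) : Ser2 d :=
  fun x => ∑ᶠ p : QTree d × QTree d,
    S p * (if x.2 = p.2 ∧ x.1 = qk (f (qout p.1)) then 1 else 0)

/-- `(f ⊗ id)` killing the trees containing grey symbols (the convention
`ℐ_a(τ) = 0` for `τ` containing a grey symbol). -/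
def mapFstKill {d : ℕ} (f : Tree d → Tree d) (S : Ser2 d) : Ser2 d :=
  fun x => ∑ᶠ p : QTree d × QTree d,
    S p * (if ¬ Tree.HasGray (qout p.1) ∧ x.2 = p.2 ∧ x.1 = qk (f (qout p.1)) then 1 else 0)

/-- Product of series (bilinear extension of the tree product). -/
def mulS {d : ℕ} (A B : Ser d) : Ser d :=
  fun x => ∑ᶠ p : QTree d × QTree d,
    A p.1 * B p.2 * (if x = qk (Tree.mul (qout p.1) (qout p.2)) then 1 else 0)

/-- Product of tensor series. -/
def mul2 {d : ℕ} (A B : Ser2 d) : Ser2 d :=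
  fun x => ∑ᶠ p : (QTree d × QTree d) × (QTree d × QTree d),
    A p.1 * B p.2 *
      (if x.1 = qk (Tree.mul (qout p.1.1) (qout p.2.1)) ∧
          x.2 = qk (Tree.mul (qout p.1.2) (qout p.2.2)) then 1 else 0)

/-- A branch specification: a concrete grey leaf, or an edge whose subtree is a series. -/
inductive BSpec (d : ℕ) where
  | ser (isP : Bool) (a : Multi d) (S : Ser d)
  | gray (a k : Multi d)

def BSpec.coeff {d : ℕ} : BSpec d → QTree d → ℝ
  | .ser _ _ S, c => S c
  | .gray _ _, c => if c = qk (Tree.one false) then 1 else 0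

def BSpec.toBranch {d : ℕ} : BSpec d → QTree d → Branch d
  | .ser p a _, c => Sum.inl ((p, a), qout c)
  | .gray a k, _ => Tree.grayB a k

/-- The tree `node(l,g,k,v; branches)` where the subtree of each (non-grey)
branch is drawn from a series; this is the multilinear extension of the
node-building operation to series. -/
def nodeSer {d : ℕ} (l g : Bool) (k : Multi d) (v : Bool) (specs : List (BSpec d)) : Ser d :=
  fun x => ∑ᶠ cs : List (QTree d),
    if cs.length = specs.length then
      (List.zipWith BSpec.coeff specs cs).prod *
        dqT (Tree.node l g k v (List.zipWith BSpec.toBranch specs cs)) x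
    else 0

/-- Branch specifications of a list of (decoration, subtree) pairs. -/
def specsOf {d : ℕ} (bs : List (Multi d × Tree d)) : List (BSpec d) :=
  bs.map fun p => BSpec.ser false p.1 (dqT p.2)

/-- Branch specifications of a list of branches. -/
def specsOfB {d : ℕ} (bs : List (Branch d)) : List (BSpec d) :=
  bs.map fun b => match b with
    | Sum.inl ((p, a), t) => BSpec.ser p a (dqT t)
    | Sum.inr ak => BSpec.gray ak.1 ak.2

/-- The symmetry-factor pairing `⟨σ,τ⟩ = S(τ) 𝟙_{σ=τ}`, extended bilinearly. -/
def pairS {d : ℕ} (A B : Ser d) : ℝ :=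
  ∑ᶠ c : QTree d, A c * B c * (Tree.Sfac (qout c) : ℝ)

/-- The pairing on tensors, `⟨σ₁⊗σ₂, τ₁⊗τ₂⟩ = ⟨σ₁,τ₁⟩⟨σ₂,τ₂⟩`. -/
def pair2 {d : ℕ} (A B : Ser2 d) : ℝ :=
  ∑ᶠ p : QTree d × QTree d,
    A p * B p * (Tree.Sfac (qout p.1) : ℝ) * (Tree.Sfac (qout p.2) : ℝ)

/-- Symmetry factor of a class. -/
def SQ {d : ℕ} (c : QTree d) : ℕ := Tree.Sfac (qout c)

/-- Degree of a class. -/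
def degQ {d : ℕ} (α lam : ℝ) (c : QTree d) : ℝ := Tree.deg α lam (qout c)

def IsT0Q {d : ℕ} (c : QTree d) : Prop := ∃ t, qk t = c ∧ Tree.IsT0 t
/-- classes of trees in `T_0^*` (marker `𝔳 = 1` everywhere). -/
def IsT0starQ {d : ℕ} (c : QTree d) : Prop := ∃ t, qk t = c ∧ Tree.IsT0 t ∧ Tree.VAll true t
/-- classes of trees in `T_0^{X,*}`. -/
def IsT0XstarQ {d : ℕ} (c : QTree d) : Prop := ∃ t, qk t = c ∧ Tree.IsT0X t ∧ Tree.VAll true t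


/-! ### Defining equations of the maps on decorated trees -/

/-- Defining recursion of the localisation map `M_loc`:
`M_loc (ζ_l Y^𝔳 ∏ᵢ ℐ_{aᵢ}(τᵢ) ∏ⱼ grayℐ_{bⱼ}(X^{kⱼ}))
  = Σ_k (X^k/k!) ζ_l Y^𝔳 ∏ᵢ ℐ_{aᵢ}(M_loc τᵢ) ∏ⱼ grayℐ_{bⱼ}(X^{kⱼ})`. -/
def MlocEqs {d : ℕ} (Mloc : QTree d → Ser d) : Prop :=
  ∀ (l g : Bool) (v : Bool) (bs : List (Branch d)),
    Tree.IsT0g (Tree.node l g 0 v bs) →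
    Mloc (qk (Tree.node l g 0 v bs)) = fun x =>
      ∑ᶠ k : Multi d, (1 / (mfact k : ℝ)) *
        nodeSer l g k v (bs.map fun b => match b with
          | Sum.inl ((p, a), t) => BSpec.ser p a (Mloc (qk t))
          | Sum.inr ak => BSpec.gray ak.1 ak.2) x

/-- Defining recursion of the abstract derivative `↑_μ`:
it vanishes on trees with no edge and
`↑_μ (ζ_l Y^𝔳 ∏ᵢ ℐ_{aᵢ}(τᵢ)) = ζ_l Y^𝔳 Σᵢ (ℐ'_{aᵢ}(τᵢ) + ℐ_{aᵢ}(↑_μ τᵢ)) ∏_{j≠i} ℐ_{aⱼ}(τⱼ)`. -/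
def UpEqs {d : ℕ} (up : QTree d → Ser d) : Prop :=
  ∀ (l : Bool) (v : Bool) (bs : List (Multi d × Tree d)), (∀ p ∈ bs, Tree.IsT0 p.2) →
    up (qk (Tree.mk0 l v bs)) =
      (∑ i : Fin bs.length,
        dqT (Tree.node l false 0 v
          ((bs.map fun p => Tree.intB p.1 p.2).set i.1
            (Tree.intPB (bs.get i).1 (bs.get i).2)))) +
      ∑ i : Fin bs.length,
        nodeSer l false 0 v
          ((specsOf bs).set i.1 (BSpec.ser false (bs.get i).1 (up (qk (bs.get i).2))))

/-- Defining recursion of the grafting operator `↷_a` (grafting with an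
`ℐ'_a`-edge on the nodes with marker `𝔳 = 1`; grafting at the root switches the
marker of the root to `0`). -/
def GraftEqs {d : ℕ} (graft : Multi d → QTree d → QTree d → Ser d) : Prop :=
  ∀ (a : Multi d) (σ : Tree d), Tree.IsT0 σ →
    ∀ (l : Bool) (bs : List (Multi d × Tree d)), (∀ p ∈ bs, Tree.IsT0 p.2) →
      (graft a (qk σ) (qk (Tree.mk0 l true bs)) =
        dqT (Tree.node l false 0 false
          (Tree.intPB a σ :: bs.map fun p => Tree.intB p.1 p.2)) +
        ∑ i : Fin bs.length,
          nodeSer l false 0 true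
            ((specsOf bs).set i.1
              (BSpec.ser false (bs.get i).1 (graft a (qk σ) (qk (bs.get i).2))))) ∧
      (graft a (qk σ) (qk (Tree.mk0 l false bs)) =
        ∑ i : Fin bs.length,
          nodeSer l false 0 false
            ((specsOf bs).set i.1
              (BSpec.ser false (bs.get i).1 (graft a (qk σ) (qk (bs.get i).2)))))

/-- Defining equations of the grafting at the root only, `↷_a^{root}`. -/
def GraftRootEqs {d : ℕ} (graftR : Multi d → QTree d → QTree d → Ser d) : Prop :=
  ∀ (a : Multi d) (σ : Tree d) (l : Bool) (v : Bool) (bs : List (Multi d × Tree d)),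
    graftR a (qk σ) (qk (Tree.mk0 l v bs)) =
      if v then
        dqT (Tree.node l false 0 false
          (Tree.intPB a σ :: bs.map fun p => Tree.intB p.1 p.2))
      else 0

/-- Defining recursion of the grey grafting `gray↷_a` on `𝒯_0^X`. -/
def GAEqs {d : ℕ} (GA : Multi d → QTree d → Ser d) : Prop :=
  ∀ (a : Multi d) (l : Bool) (k : Multi d) (v : Bool) (bs : List (Multi d × Tree d)),
    (∀ p ∈ bs, Tree.IsT0X p.2) →
    GA a (qk (Tree.mkX l k v bs)) =
      (fun x => (if v = true then (1 : ℝ) else 0) *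
        ∑ᶠ j : Multi d, if j ≤ a then
          (mbinom k j : ℝ) *
            dqT (Tree.node l false (k - j) v
              (Tree.grayB (a - j) j :: bs.map fun p => Tree.intB p.1 p.2)) x
        else 0) +
      ∑ i : Fin bs.length,
        nodeSer l false k v
          ((specsOf bs).set i.1 (BSpec.ser false (bs.get i).1 (GA a (qk (bs.get i).2))))

/-- Defining recursion of the grey grafting `gray↷_{a,k}` on `𝒯_0^𝔤`. -/
def GAKEqs {d : ℕ} (GAK : Multi d → Multi d → QTree d → Ser d) : Prop :=
  ∀ (a k0 : Multi d) (l g : Bool) (v : Bool) (bs : List (Branch d)),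
    Tree.IsT0g (Tree.node l g 0 v bs) →
    GAK a k0 (qk (Tree.node l g 0 v bs)) =
      (fun x => (if v = true then (1 : ℝ) else 0) *
        dqT (Tree.node l g 0 v (Tree.grayB a k0 :: bs)) x) +
      ∑ i : Fin bs.length,
        (match bs.get i with
          | Sum.inl ((false, ai), ti) =>
              nodeSer l g 0 v ((specsOfB bs).set i.1
                (BSpec.ser false ai (GAK a k0 (qk ti))))
          | _ => 0)

/-- Defining recursion of the coproduct `Δ_a`, dual to `↷_a`. -/
def DaEqs {d : ℕ} (Da : Multi d → QTree d → Ser2 d) : Prop :=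
  ∀ a : Multi d,
    (Da a (qk (Tree.one false)) = dq2 (Tree.one false) (Tree.one false)) ∧
    (Da a (qk (Tree.xi false)) = dq2 (Tree.xi false) (Tree.one true)) ∧
    (∀ (b : Multi d) (t : Tree d), Tree.IsT0 t →
      Da a (qk (Tree.plantIP b t)) =
        mapSnd (Tree.plantI b) (Da a (qk t)) +
          (if a = b then dq2 t (Tree.one true) else 0)) ∧
    (∀ (b : Multi d) (t : Tree d), Tree.IsT0 t →
      Da a (qk (Tree.plantI b t)) = mapSnd (Tree.plantI b) (Da a (qk t))) ∧
    (∀ s t : Tree d, Tree.IsT1 s → Tree.IsT1 t → Tree.VAll false s → Tree.VAll false t →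
      Da a (qk (Tree.mul s t)) =
        mul2 (Da a (qk s)) (dq2 (Tree.one false) t) +
          mul2 (dq2 (Tree.one false) s) (Da a (qk t)))

/-- Defining recursion of the elementary-cuts coproduct `Δ_1`. -/
def D1Eqs {d : ℕ} (D1 : QTree d → Ser2 d) : Prop :=
  (D1 (qk (Tree.one false)) = dq2 (Tree.one false) (Tree.one false)) ∧
  (D1 (qk (Tree.xi false)) = dq2 (Tree.xi false) (Tree.one true)) ∧
  (∀ (a : Multi d) (t : Tree d), Tree.IsT0 t →
    D1 (qk (Tree.plantI a t)) =
      mapSnd (Tree.plantI a) (D1 (qk t)) + dq2 (Tree.plantIP a t) (Tree.one true)) ∧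
  (∀ s t : Tree d, Tree.IsT0 s → Tree.IsT0 t → Tree.VAll false s → Tree.VAll false t →
    D1 (qk (Tree.mul s t)) =
      mul2 (D1 (qk s)) (dq2 (Tree.one false) t) +
        mul2 (dq2 (Tree.one false) s) (D1 (qk t)))

/-- Defining recursion of the extraction-at-the-root coproduct `Δ_r`. -/
def DrEqs {d : ℕ} (Dr : QTree d → Ser2 d) : Prop :=
  (∀ v : Bool, Dr (qk (Tree.one v)) = dq2 (Tree.one v) (Tree.one false)) ∧
  (Dr (qk (Tree.xi false)) =
    dq2 (Tree.atom false true 0 false) (Tree.xi false) + dq2 (Tree.xi false) (Tree.one false)) ∧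
  (∀ i : Fin (d + 1),
    Dr (qk (Tree.poly (Pi.single i 1))) =
      dq2 (Tree.one false) (Tree.poly (Pi.single i 1)) +
        dq2 (Tree.poly (Pi.single i 1)) (Tree.one false)) ∧
  (∀ (a : Multi d) (t : Tree d), Tree.IsT0X t →
    Dr (qk (Tree.plantI a t)) =
      mapFstKill (Tree.plantI a) (Dr (qk t)) +
        fun x => ∑ᶠ k : Multi d,
          (1 / (mfact k : ℝ)) * dq2 (Tree.plantG a k) (Tree.plantI (a + k) t) x) ∧
  (∀ (a : Multi d) (t : Tree d), Tree.IsT0X t →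
    Dr (qk (Tree.plantIP a t)) = fun x =>
      ∑ᶠ k : Multi d,
        (1 / (mfact k : ℝ)) * dq2 (Tree.plantG a k) (Tree.plantIP (a + k) t) x) ∧
  (∀ s t : Tree d, Tree.IsT1X s → Tree.IsT1X t →
    Dr (qk (Tree.mul s t)) = mul2 (Dr (qk s)) (Dr (qk t)))

/-- Defining recursion of the map `⇑` (summing over all edge decorations). -/
def Up2Eqs {d : ℕ} (Up2 : QTree d → Ser d) : Prop :=
  (∀ (l : Bool) (v : Bool), Up2 (qk (Tree.atom l false 0 v)) = dqT (Tree.atom l false 0 v)) ∧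
  (∀ t : Tree d, Tree.IsT1 t → Tree.Dec0 t →
    (Up2 (qk (Tree.plantI 0 t)) = fun x =>
      ∑ᶠ a : Multi d, nodeSer false false 0 false [BSpec.ser false a (Up2 (qk t))] x) ∧
    (Up2 (qk (Tree.plantIP 0 t)) = fun x =>
      ∑ᶠ a : Multi d, nodeSer false false 0 false [BSpec.ser true a (Up2 (qk t))] x)) ∧
  (∀ s t : Tree d, Tree.IsT1 s → Tree.IsT1 t → Tree.Dec0 s → Tree.Dec0 t →
    Up2 (qk (Tree.mul s t)) = mulS (Up2 (qk s)) (Up2 (qk t)))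


namespace Tree
variable {d : ℕ}

/-- Fuelled list of the planar trees `↑_μ^e τ`, for `e` ranging over the
`ℐ`-edges of `τ`: the type of the edge `e` is switched from `ℐ` to `ℐ'`. -/
def switchesN : ℕ → Tree d → List (Tree d)
  | 0, _ => []
  | n + 1, .node l g k v bs =>
      (List.finRange bs.length).flatMap fun i =>
        match bs.get i with
        | Sum.inl ((false, a), t) =>
            Tree.node l g k v (bs.set i.1 (intPB a t)) ::
              (switchesN n t).map fun t' => Tree.node l g k v (bs.set i.1 (intB a t'))
        | _ => []

/-- The list of the planar trees `↑_μ^e τ`, `e ∈ E_τ` an `ℐ`-edge of `τ`. -/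
def switches (t : Tree d) : List (Tree d) := switchesN (sizeOf t) t

end Tree

/-- The insertion product `ℐ'_a(σ) ↷ τ = σ ↷_a τ` (vanishing on anything that
is not a planted tree `ℐ'_a(σ)`), as a pairing of the two components of a tensor. -/
def insApply {d : ℕ} (graft : Multi d → QTree d → QTree d → Ser d)
    (c₁ c₂ : QTree d) : Ser d :=
  match qout c₁ with
  | .node false false k false [Sum.inl ((true, a), σ)] =>
      if k = 0 then graft a (qk σ) c₂ else 0
  | _ => 0

/-- The insertion product applied to a tensor series. -/
def insProd {d : ℕ} (graft : Multi d → QTree d → QTree d → Ser d)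
    (S : Ser2 d) : Ser d :=
  fun x => ∑ᶠ p : QTree d × QTree d, S p * insApply graft p.1 p.2 x

/-- Recognise the class of a planted tree `ℐ_0(σ)` and return the class of `σ`. -/
def strip0 {d : ℕ} (c : QTree d) : Option (QTree d) :=
  match qout c with
  | .node false false k false [Sum.inl ((false, a), σ)] =>
      if k = 0 ∧ a = 0 then some (qk σ) else none
  | _ => none


namespace Tree
variable {d : ℕ}
/-- Decorations of the `ℐ`/`ℐ'`-edges at the root. -/
def intDecs (bs : List (Branch d)) : List (Multi d) :=
  bs.filterMap fun b => match b with
    | Sum.inl ((_, a), _) => some a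
    | Sum.inr _ => none
/-- Decorations of the grey edges at the root. -/
def grayDecs (bs : List (Branch d)) : List (Multi d) :=
  bs.filterMap fun b => match b with
    | Sum.inr (a, _) => some a
    | Sum.inl _ => none
/-- Subtrees of the `ℐ`/`ℐ'`-edges at the root. -/
def intSubs (bs : List (Branch d)) : List (Tree d) :=
  bs.filterMap fun b => match b with
    | Sum.inl (_, t) => some t
    | Sum.inr _ => none
end Tree

end Flow

namespace Flow

section Helpers

variable {d : ℕ}

lemma h_qk_qout (c : QTree d) : qk (qout c) = c := (Quot.exists_rep c).choose_spec

def h_rk0 : Tree d → Multi d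
  | .node _ _ k _ _ => k

def h_kids0 : Tree d → Set (QTree d)
  | .node _ _ _ _ bs => {c | ∃ i : Fin bs.length, ∃ pa t, bs.get i = Sum.inl (pa, t) ∧ qk t = c}

lemma h_TEquivN_sound {n : ℕ} {t t' : Tree d} (h : Tree.TEquivN n t t') : qk t = qk t' :=
  Quot.sound ⟨n, h⟩

lemma h_BRel_inl {r : Tree d → Tree d → Prop} {pa t} {b : Branch d}
    (h : Tree.BRel r (Sum.inl (pa, t)) b) : ∃ t', b = Sum.inl (pa, t') ∧ r t t' := by
  rcases b with ⟨⟨p', a'⟩, t'⟩ | x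
  · rcases pa with ⟨p, a⟩
    simp only [Tree.BRel] at h
    obtain ⟨rfl, rfl, h⟩ := h
    exact ⟨t', rfl, h⟩
  · simp [Tree.BRel] at h

lemma h_BRel_inl' {r : Tree d → Tree d → Prop} {pa t} {b : Branch d}
    (h : Tree.BRel r b (Sum.inl (pa, t))) : ∃ t', b = Sum.inl (pa, t') ∧ r t' t := by
  rcases b with ⟨⟨p', a'⟩, t'⟩ | x
  · rcases pa with ⟨p, a⟩
    simp only [Tree.BRel] at h
    obtain ⟨rfl, rfl, h⟩ := h
    exact ⟨t', rfl, h⟩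
  · simp [Tree.BRel] at h

lemma h_BRel_inr {r : Tree d → Tree d → Prop} {x} {b : Branch d}
    (h : Tree.BRel r (Sum.inr x) b) : b = Sum.inr x := by
  rcases b with ⟨⟨p', a'⟩, t'⟩ | y
  · simp [Tree.BRel] at h
  · simp only [Tree.BRel] at h
    rw [h]

lemma h_BRel_inr' {r : Tree d → Tree d → Prop} {x} {b : Branch d}
    (h : Tree.BRel r b (Sum.inr x)) : b = Sum.inr x := by
  rcases b with ⟨⟨p', a'⟩, t'⟩ | y
  · simp [Tree.BRel] at h
  · simp only [Tree.BRel] at h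
    rw [h]

lemma h_rk0_eq {t t' : Tree d} (h : Tree.TEquiv t t') : h_rk0 t = h_rk0 t' := by
  obtain ⟨n, h⟩ := h
  cases n with
  | zero => exact h.elim
  | succ n =>
    cases t; cases t'
    simp only [Tree.TEquivN] at h
    exact h.2.2.1

lemma h_kids0_eq {t t' : Tree d} (h : Tree.TEquiv t t') : h_kids0 t = h_kids0 t' := by
  obtain ⟨n, h⟩ := h
  cases n with
  | zero => exact h.elim
  | succ n =>
    cases t; cases t'
    simp only [Tree.TEquivN] at h
    obtain ⟨-, -, -, -, e, he⟩ := h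
    ext c
    simp only [h_kids0, Set.mem_ofPred_eq]
    constructor
    · rintro ⟨i, pa, t, h1, h2⟩
      have := he i
      rw [h1] at this
      obtain ⟨t', h3, h4⟩ := h_BRel_inl this
      exact ⟨e i, pa, t', h3, by rw [← h2, h_TEquivN_sound h4]⟩
    · rintro ⟨i, pa, t, h1, h2⟩
      have := he (e.symm i)
      rw [e.apply_symm_apply, h1] at this
      obtain ⟨t', h3, h4⟩ := h_BRel_inl' this
      exact ⟨e.symm i, pa, t', h3, by rw [← h2, h_TEquivN_sound h4]⟩

def h_rk (c : QTree d) : Multi d := Quot.lift h_rk0 (fun _ _ h => h_rk0_eq h) c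
def h_kids (c : QTree d) : Set (QTree d) := Quot.lift h_kids0 (fun _ _ h => h_kids0_eq h) c

lemma h_kids_finite (c : QTree d) : (h_kids c).Finite := by
  rw [← h_qk_qout c]
  change (h_kids0 (qout c)).Finite
  generalize qout c = t
  rcases t with ⟨l, g, k, v, bs⟩
  refine (Set.finite_range (fun i : Fin bs.length =>
    match bs.get i with
    | Sum.inl (_, t) => qk t
    | Sum.inr _ => qk (Tree.one false))).subset ?_
  rintro c ⟨i, pa, t, h1, h2⟩
  exact ⟨i, by simp only [h1, h2]⟩

lemma h_ShapeN_mono {P G Q : Bool} : ∀ {n m : ℕ} {t : Tree d}, n ≤ m →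
    Tree.ShapeN P G Q n t → Tree.ShapeN P G Q m t := by
  intro n
  induction n with
  | zero => intro m t _ h; exact h.elim
  | succ n ih =>
    intro m t hm h
    cases m with
    | zero => omega
    | succ m =>
      cases t
      simp only [Tree.ShapeN] at h ⊢
      refine ⟨h.1, h.2.1, fun b hb => ?_⟩
      rcases h.2.2 b hb with ⟨p, a, t, h1, h2, h3⟩ | h1
      · exact Or.inl ⟨p, a, t, h1, h2, ih (by omega) h3⟩
      · exact Or.inr h1

lemma h_ShapeN_iff {P G Q : Bool} : ∀ {n m : ℕ} {t t' : Tree d}, Tree.TEquivN n t t' →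
    (Tree.ShapeN P G Q m t ↔ Tree.ShapeN P G Q m t') := by
  intro n
  induction n with
  | zero => intro m t t' h; exact h.elim
  | succ n ih =>
    intro m t t' h
    cases m with
    | zero => exact Iff.rfl
    | succ m =>
      cases t; cases t'
      simp only [Tree.TEquivN] at h
      obtain ⟨rfl, rfl, rfl, rfl, e, he⟩ := h
      simp only [Tree.ShapeN]
      refine and_congr_right fun _ => and_congr_right fun _ => ?_
      constructor
      · intro H b hb
        obtain ⟨i, rfl⟩ := List.get_of_mem hb
        have h1 := he (e.symm i)
        rw [e.apply_symm_apply] at h1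
        rcases H _ (List.get_mem _ (e.symm i)) with ⟨p, a, t, h2, h3, h4⟩ | ⟨hG, x, h2⟩
        · rw [h2] at h1
          obtain ⟨t', h5, h6⟩ := h_BRel_inl h1
          exact Or.inl ⟨p, a, t', h5, h3, (ih h6).1 h4⟩
        · rw [h2] at h1
          exact Or.inr ⟨hG, x, h_BRel_inr h1⟩
      · intro H b hb
        obtain ⟨i, rfl⟩ := List.get_of_mem hb
        have h1 := he i
        rcases H _ (List.get_mem _ (e i)) with ⟨p, a, t, h2, h3, h4⟩ | ⟨hG, x, h2⟩
        · rw [h2] at h1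
          obtain ⟨t', h5, h6⟩ := h_BRel_inl' h1
          exact Or.inl ⟨p, a, t', h5, h3, (ih h6).2 h4⟩
        · rw [h2] at h1
          exact Or.inr ⟨hG, x, h_BRel_inr' h1⟩

lemma h_Shape_iff {P G Q : Bool} {t t' : Tree d} (h : Tree.TEquiv t t') :
    Tree.Shape P G Q t ↔ Tree.Shape P G Q t' := by
  obtain ⟨n, h⟩ := h
  exact exists_congr fun m => h_ShapeN_iff h

def h_ShQ (P G Q : Bool) (c : QTree d) : Prop :=
  Quot.lift (Tree.Shape P G Q) (fun _ _ h => propext (h_Shape_iff h)) c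

lemma h_ShQ_qk {P G Q : Bool} (t : Tree d) : h_ShQ P G Q (qk t) ↔ Tree.Shape P G Q t := Iff.rfl

lemma h_ShQ_qout {P G Q : Bool} (c : QTree d) : Tree.Shape P G Q (qout c) ↔ h_ShQ P G Q c := by
  rw [← h_ShQ_qk, h_qk_qout]

lemma h_Shape_node {P G Q : Bool} {l g : Bool} {k : Multi d} {v : Bool} {bs : List (Branch d)}
    (hg : G = true ∨ g = false) (hk : P = true ∨ k = 0)
    (hb : ∀ b ∈ bs, (∃ a t, b = Tree.intB a t ∧ Tree.Shape P G Q t) ∨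
      (G = true ∧ ∃ x, b = Sum.inr x)) : Tree.Shape P G Q (.node l g k v bs) := by
  have : ∃ m, ∀ b ∈ bs, (∃ p a t, b = Sum.inl ((p, a), t) ∧ (Q = true ∨ p = false) ∧
              Tree.ShapeN P G Q m t) ∨ (G = true ∧ ∃ x, b = Sum.inr x) := by
    clear hg hk
    induction bs with
    | nil => exact ⟨0, by simp⟩
    | cons b bs ih =>
      obtain ⟨m, hm⟩ := ih (fun b hb' => hb b (List.mem_cons_of_mem _ hb'))
      rcases hb b List.mem_cons_self with ⟨a, t, h1, m', h2⟩ | h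
      · refine ⟨max m m', fun b' hb' => ?_⟩
        rcases List.mem_cons.1 hb' with rfl | hb'
        · exact Or.inl ⟨false, a, t, h1, Or.inr rfl, h_ShapeN_mono (le_max_right _ _) h2⟩
        · rcases hm b' hb' with ⟨p, a, t, h1, h2, h3⟩ | h
          · exact Or.inl ⟨p, a, t, h1, h2, h_ShapeN_mono (le_max_left _ _) h3⟩
          · exact Or.inr h
      · refine ⟨m, fun b' hb' => ?_⟩
        rcases List.mem_cons.1 hb' with rfl | hb'
        · exact Or.inr h
        · exact hm b' hb'
  obtain ⟨m, hm⟩ := this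
  exact ⟨m + 1, hg, hk, hm⟩

/-- Class of a node with prefix branches `pre` and integration branches over classes. -/
def h_Nd {n : ℕ} (l g : Bool) (k : Multi d) (v : Bool) (pre : List (Branch d))
    (a : Fin n → Multi d) (c : Fin n → QTree d) : QTree d :=
  qk (.node l g k v (pre ++ List.ofFn fun i => Tree.intB (a i) (qout (c i))))

lemma h_rk_Nd {n : ℕ} (l g : Bool) (k : Multi d) (v : Bool) (pre : List (Branch d))
    (a : Fin n → Multi d) (c : Fin n → QTree d) : h_rk (h_Nd l g k v pre a c) = k := rfl

lemma h_mem_kids {n : ℕ} (l g : Bool) (k : Multi d) (v : Bool) (pre : List (Branch d))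
    (a : Fin n → Multi d) (c : Fin n → QTree d) (i : Fin n) :
    c i ∈ h_kids (h_Nd l g k v pre a c) := by
  have : Tree.intB (a i) (qout (c i)) ∈
      pre ++ List.ofFn fun i => Tree.intB (a i) (qout (c i)) := by
    simp only [List.mem_append, List.mem_ofFn]
    exact Or.inr ⟨i, rfl⟩
  obtain ⟨j, hj⟩ := List.get_of_mem this
  exact ⟨j, (false, a i), qout (c i), hj, h_qk_qout _⟩

lemma h_fib_finite {n : ℕ} (l g : Bool) (k : Multi d) (v : Bool) (pre : List (Branch d))
    (a : Fin n → Multi d) (x : QTree d) : {c | x = h_Nd l g k v pre a c}.Finite := by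
  refine (Set.Finite.pi (fun _ : Fin n => h_kids_finite x)).subset ?_
  rintro c rfl
  exact fun i _ => h_mem_kids ..

/-- Multilinear node building. -/
def h_nP {n : ℕ} (l g : Bool) (k : Multi d) (v : Bool) (pre : List (Branch d))
    (a : Fin n → Multi d) (S : Fin n → Ser d) (x : QTree d) : ℝ :=
  ∑ c ∈ (h_fib_finite l g k v pre a x).toFinset, ∏ i, S i (c i)

lemma h_nP_eq {n : ℕ} (l g : Bool) (k : Multi d) (v : Bool) (pre : List (Branch d))
    (a : Fin n → Multi d) (S : Fin n → Ser d) (x : QTree d) :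
    h_nP l g k v pre a S x =
      ∑ᶠ c : Fin n → QTree d, (∏ i, S i (c i)) * if x = h_Nd l g k v pre a c then 1 else 0 := by
  rw [finsum_eq_finsetSum_of_support_subset (s := (h_fib_finite l g k v pre a x).toFinset)]
  · refine Finset.sum_congr rfl fun c hc => ?_
    rw [Set.Finite.mem_toFinset] at hc
    rw [if_pos (show x = h_Nd l g k v pre a c from hc), mul_one]
  · intro c hc
    simp only [Set.Finite.coe_toFinset, Set.mem_ofPred_eq]
    by_contra h
    simp [h] at hc

lemma h_nP_ne {n : ℕ} {l g : Bool} {k : Multi d} {v : Bool} {pre : List (Branch d)}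
    {a : Fin n → Multi d} {S : Fin n → Ser d} {x : QTree d} (h : h_nP l g k v pre a S x ≠ 0) :
    ∃ c, x = h_Nd l g k v pre a c ∧ ∀ i, S i (c i) ≠ 0 := by
  obtain ⟨c, hc, h⟩ := Finset.exists_ne_zero_of_sum_ne_zero h
  rw [Set.Finite.mem_toFinset] at hc
  exact ⟨c, hc, fun i => Finset.prod_ne_zero_iff.1 h i (Finset.mem_univ _)⟩

lemma h_prod_finsum {α : Type*} {n : ℕ} (f : Fin n → α → ℝ)
    (hf : ∀ i, (Function.support (f i)).Finite) :
    (Function.support fun c : Fin n → α => ∏ i, f i (c i)).Finite ∧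
    ∑ᶠ c : Fin n → α, ∏ i, f i (c i) = ∏ i, ∑ᶠ y, f i y := by
  have hsub : (Function.support fun c : Fin n → α => ∏ i, f i (c i)) ⊆
      ((Fintype.piFinset fun i => (hf i).toFinset : Finset (Fin n → α)) : Set (Fin n → α)) := by
    intro c hc
    simp only [Finset.mem_coe, Fintype.mem_piFinset, Set.Finite.mem_toFinset]
    exact fun i => Finset.prod_ne_zero_iff.1 hc i (Finset.mem_univ _)
  refine ⟨(Finset.finite_toSet _).subset hsub, ?_⟩
  rw [finsum_eq_finsetSum_of_support_subset _ hsub]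
  rw [← Finset.prod_univ_sum]
  refine Finset.prod_congr rfl fun i _ => ?_
  rw [finsum_eq_finsetSum_of_support_subset]
  simp

lemma h_subst {n : ℕ} (l g : Bool) (k : Multi d) (v : Bool) (pre : List (Branch d))
    (a : Fin n → Multi d) (S : Fin n → Ser d) (G : Fin n → QTree d → Ser d) (x : QTree d)
    (hf : ∀ i y, {c | S i c * G i c y ≠ 0}.Finite) :
    {c : Fin n → QTree d |
      (∏ i, S i (c i)) * h_nP l g k v pre a (fun i => G i (c i)) x ≠ 0}.Finite ∧
    h_nP l g k v pre a (fun i => extT (G i) (S i)) x =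
      ∑ᶠ c : Fin n → QTree d, (∏ i, S i (c i)) * h_nP l g k v pre a (fun i => G i (c i)) x := by
  have key : ∀ c : Fin n → QTree d,
      (∏ i, S i (c i)) * h_nP l g k v pre a (fun i => G i (c i)) x =
        ∑ c' ∈ (h_fib_finite l g k v pre a x).toFinset, ∏ i, (S i (c i) * G i (c i) (c' i)) := by
    intro c
    simp only [h_nP, Finset.mul_sum, Finset.prod_mul_distrib]
  simp only [key]
  have hP := fun c' : Fin n → QTree d =>
    h_prod_finsum (fun i y => S i y * G i y (c' i)) (fun i => hf i (c' i))
  constructor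
  · refine ((h_fib_finite l g k v pre a x).biUnion (fun c' _ => (hP c').1)).subset ?_
    intro c hc
    obtain ⟨c', hc', h⟩ := Finset.exists_ne_zero_of_sum_ne_zero hc
    rw [Set.Finite.mem_toFinset] at hc'
    exact Set.mem_biUnion hc' h
  · rw [finsum_sum_comm _ _ (fun c' _ => (hP c').1)]
    exact Finset.sum_congr rfl fun c' _ => (hP c').2.symm

lemma h_push {P Q : Type*} (w : P → ℝ) (N : P → Q) (G : Q → ℝ)
    (hf : {p | w p * G (N p) ≠ 0}.Finite) :
    ∑ᶠ c, (∑ᶠ p, w p * if c = N p then 1 else 0) * G c = ∑ᶠ p, w p * G (N p) := by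
  simp only [finsum_mul]
  have hfin : (Function.support fun q : P × Q =>
      w q.1 * (if q.2 = N q.1 then 1 else 0) * G q.2).Finite := by
    refine (hf.image fun p => (p, N p)).subset ?_
    rintro ⟨p, c⟩ h
    simp only [Function.mem_support] at h
    have hc : c = N p := by
      by_contra h'
      simp [h'] at h
    subst hc
    exact ⟨p, by simpa using h, rfl⟩
  have hfin' : (Function.support fun q : Q × P =>
      w q.2 * (if q.1 = N q.2 then 1 else 0) * G q.1).Finite := by
    refine (hfin.image Prod.swap).subset ?_
    rintro ⟨c, p⟩ h
    exact ⟨(p, c), h, rfl⟩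
  have e1 := finsum_curry _ hfin
  have e2 := finsum_curry _ hfin'
  have e3 : (∑ᶠ q : P × Q, w q.1 * (if q.2 = N q.1 then 1 else 0) * G q.2) =
      ∑ᶠ q : Q × P, w q.2 * (if q.1 = N q.2 then 1 else 0) * G q.1 :=
    finsum_eq_of_bijective Prod.swap Prod.swap_bijective (fun _ => rfl)
  simp only at e1 e2
  rw [← e2, ← e3, e1]
  refine finsum_congr fun p => ?_
  rw [finsum_eq_single _ (N p)]
  · simp
  · intro c hc
    simp [hc]

lemma h_extT_dqC (S : Ser d) : extT dqC S = S := by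
  funext x
  simp only [extT, dqC]
  rw [finsum_eq_single _ x]
  · simp
  · intro c hc
    simp [hc.symm]

lemma h_extT_dqT (G : QTree d → Ser d) (t : Tree d) : extT G (dqT t) = G (qk t) := by
  funext x
  simp only [extT, dqT]
  rw [finsum_eq_single _ (qk t)]
  · simp
  · intro c hc
    simp [hc]

lemma h_dqT_eq (t : Tree d) : dqT t = dqC (qk t) := rfl

lemma h_fsinj {A B : Type*} (e : A → B) (he : Function.Injective e) (f : B → ℝ) (g : A → ℝ)
    (h0 : ∀ b, b ∉ Set.range e → f b = 0) (h1 : ∀ a, f (e a) = g a) :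
    ∑ᶠ b, f b = ∑ᶠ a, g a := by
  have : ∑ᶠ b, f b = ∑ᶠ b ∈ Set.range e, f b := by
    refine finsum_congr fun b => ?_
    by_cases hb : b ∈ Set.range e
    · simp [hb]
    · simp [hb, h0 b hb]
  rw [this, finsum_mem_range he]
  exact finsum_congr h1

lemma h_zip {A B C : Type*} {n : ℕ} (f : A → B → C) (s : Fin n → A) (c : Fin n → B) :
    List.zipWith f (List.ofFn s) (List.ofFn c) = List.ofFn fun i => f (s i) (c i) := by
  apply List.ext_getElem <;> simp

lemma h_list_range {A : Type*} {n : ℕ} (cs : List A) (h : cs.length = n) :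
    ∃ c : Fin n → A, List.ofFn c = cs := by
  subst h
  exact ⟨cs.get, List.ofFn_get cs⟩

lemma h_nodeSer {n : ℕ} (l g : Bool) (k : Multi d) (v : Bool) (a : Fin n → Multi d)
    (S : Fin n → Ser d) :
    nodeSer l g k v (List.ofFn fun i => BSpec.ser false (a i) (S i)) =
      h_nP l g k v [] a S := by
  funext x
  rw [h_nP_eq]
  refine h_fsinj List.ofFn List.ofFn_injective _ _ ?_ ?_
  · intro cs hcs
    rw [if_neg]
    intro h
    rw [List.length_ofFn] at h
    obtain ⟨c, rfl⟩ := h_list_range cs h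
    exact hcs ⟨c, rfl⟩
  · intro c
    rw [if_pos (by simp), h_zip, h_zip, List.prod_ofFn]
    rfl

lemma h_nodeSer_gray {n : ℕ} (l g : Bool) (k : Multi d) (v : Bool) (a : Fin n → Multi d)
    (S : Fin n → Ser d) (b k0 : Multi d) :
    nodeSer l g k v (BSpec.gray b k0 :: List.ofFn fun i => BSpec.ser false (a i) (S i)) =
      h_nP l g k v [Tree.grayB b k0] a S := by
  funext x
  rw [h_nP_eq]
  refine h_fsinj (fun c : Fin n → QTree d => qk (Tree.one false) :: List.ofFn c) ?_ _ _ ?_ ?_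
  · intro c c' h
    exact List.ofFn_injective (List.cons.inj h).2
  · intro cs hcs
    split_ifs with h
    · cases cs with
      | nil => simp at h
      | cons q cs =>
        simp only [List.length_cons, List.length_ofFn, add_left_inj] at h
        obtain ⟨c, rfl⟩ := h_list_range cs h
        have : q ≠ qk (Tree.one false) := by
          rintro rfl
          exact hcs ⟨c, rfl⟩
        simp [BSpec.coeff, this]
    · rfl
  · intro c
    rw [if_pos (by simp), List.zipWith_cons_cons, List.zipWith_cons_cons, h_zip, h_zip,
      List.prod_cons, List.prod_ofFn]
    simp only [BSpec.coeff, if_true, one_mul]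
    rfl

lemma h_nP_rk {n : ℕ} {l g : Bool} {k : Multi d} {v : Bool} {pre : List (Branch d)}
    {a : Fin n → Multi d} {S : Fin n → Ser d} {x : QTree d} (h : k ≠ h_rk x) :
    h_nP l g k v pre a S x = 0 := by
  by_contra h'
  obtain ⟨c, rfl, -⟩ := h_nP_ne h'
  exact h (h_rk_Nd ..).symm

lemma h_Shape_T0g {n : ℕ} {l g v : Bool} {a : Fin n → Multi d} {τ : Fin n → Tree d}
    (hτ : ∀ i, Tree.IsT0g (τ i)) :
    Tree.IsT0g (Tree.node l g 0 v (List.ofFn fun i => Tree.intB (a i) (τ i))) := by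
  refine h_Shape_node (Or.inl rfl) (Or.inr rfl) ?_
  intro b hb
  rw [List.mem_ofFn] at hb
  obtain ⟨i, rfl⟩ := hb
  exact Or.inl ⟨_, _, rfl, hτ i⟩

lemma h_Shape_T0g' {n : ℕ} {l g v : Bool} {a : Fin n → Multi d} {τ : Fin n → Tree d}
    (hτ : ∀ i, Tree.IsT0g (τ i)) (b k0 : Multi d) :
    Tree.IsT0g (Tree.node l g 0 v
      (Tree.grayB b k0 :: List.ofFn fun i => Tree.intB (a i) (τ i))) := by
  refine h_Shape_node (Or.inl rfl) (Or.inr rfl) ?_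
  intro b hb
  rw [List.mem_cons, List.mem_ofFn] at hb
  rcases hb with rfl | ⟨i, rfl⟩
  · exact Or.inr ⟨rfl, _, rfl⟩
  · exact Or.inl ⟨_, _, rfl, hτ i⟩

lemma h_Mloc {Mloc : QTree d → Ser d} (hM : MlocEqs Mloc) {n : ℕ} {l g v : Bool}
    {a : Fin n → Multi d} {τ : Fin n → Tree d} (hτ : ∀ i, Tree.IsT0g (τ i)) (x : QTree d) :
    Mloc (qk (Tree.node l g 0 v (List.ofFn fun i => Tree.intB (a i) (τ i)))) x =
      1 / (mfact (h_rk x) : ℝ) * h_nP l g (h_rk x) v [] a (fun i => Mloc (qk (τ i))) x := by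
  rw [hM l g v _ (h_Shape_T0g hτ)]
  rw [List.map_ofFn]
  simp only [Function.comp_def, Tree.intB, h_nodeSer]
  refine finsum_eq_single _ (h_rk x) fun k hk => ?_
  rw [h_nP_rk hk, mul_zero]

lemma h_Mloc_gray {Mloc : QTree d → Ser d} (hM : MlocEqs Mloc) {n : ℕ} {l g v : Bool}
    {a : Fin n → Multi d} {τ : Fin n → Tree d} (hτ : ∀ i, Tree.IsT0g (τ i)) (b k0 : Multi d)
    (x : QTree d) :
    Mloc (qk (Tree.node l g 0 v
      (Tree.grayB b k0 :: List.ofFn fun i => Tree.intB (a i) (τ i)))) x =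
      1 / (mfact (h_rk x) : ℝ) *
        h_nP l g (h_rk x) v [Tree.grayB b k0] a (fun i => Mloc (qk (τ i))) x := by
  rw [hM l g v _ (h_Shape_T0g' hτ b k0)]
  rw [List.map_cons, List.map_ofFn]
  simp only [Function.comp_def, Tree.intB, Tree.grayB, h_nodeSer_gray]
  refine finsum_eq_single _ (h_rk x) fun k hk => ?_
  rw [h_nP_rk hk, mul_zero]

lemma h_ofFn_set {A : Type*} {n : ℕ} (f : Fin n → A) (i : Fin n) (y : A) :
    (List.ofFn f).set i.1 y = List.ofFn fun j => if j = i then y else f j := by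
  apply List.ext_getElem
  · simp
  · intro m h1 h2
    simp only [List.getElem_set, List.getElem_ofFn, Fin.ext_iff]
    split_ifs <;> first | rfl | omega

lemma h_sum_len {M A : Type*} [AddCommMonoid M] {n : ℕ} (f : Fin n → A)
    (F : (i : ℕ) → A → M) :
    ∑ i : Fin (List.ofFn f).length, F i.1 ((List.ofFn f).get i) = ∑ i : Fin n, F i.1 (f i) := by
  refine Fintype.sum_equiv (finCongr (by simp)) _ _ fun i => ?_
  simp
  rfl

lemma h_GA {GA : Multi d → QTree d → Ser d} (hGA : GAEqs GA) {n : ℕ} {l v : Bool}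
    {k b : Multi d} {a : Fin n → Multi d} {c : Fin n → QTree d}
    (hc : ∀ i, h_ShQ true false false (c i)) (x : QTree d) :
    GA b (h_Nd l false k v [] a c) x =
      (if v = true then (1 : ℝ) else 0) *
        (∑ j ∈ Finset.Iic b, (mbinom k j : ℝ) *
          if x = h_Nd l false (k - j) v [Tree.grayB (b - j) j] a c then 1 else 0) +
      ∑ i : Fin n, h_nP l false k v [] a
        (fun j => if j = i then GA b (c j) else dqC (c j)) x := by
  have H := congrFun (hGA b l k v (List.ofFn fun i => (a i, qout (c i))) (by
    intro p hp
    rw [List.mem_ofFn] at hp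
    obtain ⟨i, rfl⟩ := hp
    exact (h_ShQ_qout _).2 (hc i))) x
  simp only [Tree.mkX, List.map_ofFn, Function.comp_def, specsOf] at H
  have e : h_Nd l false k v [] a c =
    qk (Tree.node l false k v (List.ofFn fun i => Tree.intB (a i) (qout (c i)))) := rfl
  rw [e, H, Pi.add_apply, Finset.sum_apply]
  congr 1
  · congr 1
    rw [finsum_eq_finsetSum_of_support_subset (s := Finset.Iic b)]
    · refine Finset.sum_congr rfl fun j hj => ?_
      rw [Finset.mem_Iic] at hj
      rw [if_pos hj]
      rfl
    · intro j hj
      simp only [Finset.coe_Iic, Set.mem_Iic]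
      by_contra h
      simp [h] at hj
  · rw [h_sum_len (fun i => (a i, qout (c i))) (fun i q => nodeSer l false k v
      ((List.ofFn fun i => BSpec.ser false (a i) (dqT (qout (c i)))).set i
        (BSpec.ser false q.1 (GA b (qk q.2)))) x)]
    refine Finset.sum_congr rfl fun i _ => ?_
    rw [h_ofFn_set, ← h_nodeSer]
    congr 2
    funext j
    split_ifs with h
    · subst h
      simp [h_qk_qout]
    · simp [h_dqT_eq, h_qk_qout]

lemma h_GAK {GAK : Multi d → Multi d → QTree d → Ser d} (hG : GAKEqs GAK) {n : ℕ} {l v : Bool}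
    {b k0 : Multi d} {a : Fin n → Multi d} {τ : Fin n → Tree d}
    (hτ : ∀ i, Tree.IsT0g (τ i)) (x : QTree d) :
    GAK b k0 (qk (Tree.node l false 0 v (List.ofFn fun i => Tree.intB (a i) (τ i)))) x =
      (if v = true then (1 : ℝ) else 0) *
        dqT (Tree.node l false 0 v
          (Tree.grayB b k0 :: List.ofFn fun i => Tree.intB (a i) (τ i))) x +
      ∑ i : Fin n, h_nP l false 0 v [] a
        (fun j => if j = i then GAK b k0 (qk (τ j)) else dqT (τ j)) x := by
  rw [hG b k0 l false v _ (h_Shape_T0g hτ), Pi.add_apply, Finset.sum_apply]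
  congr 1
  refine (h_sum_len (fun i => Tree.intB (a i) (τ i)) (fun i q =>
    (match q with
      | Sum.inl ((false, ai), ti) =>
              nodeSer l false 0 v ((specsOfB
                  (List.ofFn fun i => Tree.intB (a i) (τ i))).set i
                (BSpec.ser false ai (GAK b k0 (qk ti))))
          | _ => 0) x)).trans ?_
  refine Finset.sum_congr rfl fun i _ => ?_
  simp only [Tree.intB, specsOfB, List.map_ofFn, Function.comp_def]
  rw [h_ofFn_set, ← h_nodeSer]
  congr 2
  funext j
  split_ifs with h
  · subst h; rfl
  · rfl

lemma h_decomp {m : ℕ} {t : Tree d} (h : Tree.ShapeN false false false (m + 1) t) :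
    ∃ (l v : Bool) (n : ℕ) (a : Fin n → Multi d) (τ : Fin n → Tree d),
      t = Tree.node l false 0 v (List.ofFn fun i => Tree.intB (a i) (τ i)) ∧
      ∀ i, Tree.ShapeN false false false m (τ i) := by
  rcases t with ⟨l, g, k, v, bs⟩
  simp only [Tree.ShapeN, Bool.false_eq_true, false_or, false_and, or_false] at h
  obtain ⟨rfl, rfl, hb⟩ := h
  have : ∀ i : Fin bs.length, ∃ a t, bs.get i = Tree.intB a t ∧
      Tree.ShapeN false false false m t := by
    intro i
    obtain ⟨p, a, t, h1, rfl, h3⟩ := hb _ (List.get_mem bs i)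
    exact ⟨a, t, h1, h3⟩
  choose a τ h1 h2 using this
  refine ⟨l, v, bs.length, a, τ, ?_, h2⟩
  rw [← funext h1, List.ofFn_get]

lemma h_T0_g {m : ℕ} : ∀ {t : Tree d}, Tree.ShapeN false false false m t → Tree.IsT0g t := by
  induction m with
  | zero => intro t h; exact h.elim
  | succ m ih =>
    intro t h
    obtain ⟨l, v, n, a, τ, rfl, hτ⟩ := h_decomp h
    exact h_Shape_T0g fun i => ih (hτ i)

lemma h_C1 {GAK : Multi d → Multi d → QTree d → Ser d} (hG : GAKEqs GAK) (b k0 : Multi d)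
    {m : ℕ} : ∀ {t : Tree d}, Tree.ShapeN false false false m t →
      {c | GAK b k0 (qk t) c ≠ 0}.Finite ∧
      ∀ c, GAK b k0 (qk t) c ≠ 0 → h_ShQ false true false c := by
  induction m with
  | zero => intro t h; exact h.elim
  | succ m ih =>
    intro t h
    obtain ⟨l, v, n, a, τ, rfl, hτ⟩ := h_decomp h
    have hg := fun i => h_T0_g (hτ i)
    have key : ∀ x, GAK b k0 (qk (Tree.node l false 0 v
        (List.ofFn fun i => Tree.intB (a i) (τ i)))) x ≠ 0 →
        x = qk (Tree.node l false 0 v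
          (Tree.grayB b k0 :: List.ofFn fun i => Tree.intB (a i) (τ i))) ∨
        ∃ i : Fin n, ∃ c : Fin n → QTree d, x = h_Nd l false 0 v [] a c ∧
          ∀ j, if j = i then GAK b k0 (qk (τ j)) (c j) ≠ 0 else c j = qk (τ j) := by
      intro x hx
      rw [h_GAK hG hg] at hx
      by_cases h1 : x = qk (Tree.node l false 0 v
          (Tree.grayB b k0 :: List.ofFn fun i => Tree.intB (a i) (τ i)))
      · exact Or.inl h1
      · right
        rw [dqT, if_neg h1, mul_zero, zero_add] at hx
        obtain ⟨i, -, hi⟩ := Finset.exists_ne_zero_of_sum_ne_zero hx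
        obtain ⟨c, hc, hc'⟩ := h_nP_ne hi
        refine ⟨i, c, hc, fun j => ?_⟩
        have := hc' j
        split_ifs at this ⊢ with h
        · exact this
        · by_contra h2
          simp [dqT, h2] at this
    constructor
    · refine ((Set.finite_singleton (qk (Tree.node l false 0 v
          (Tree.grayB b k0 :: List.ofFn fun i => Tree.intB (a i) (τ i))))).union
        (Set.finite_iUnion fun i : Fin n => (Set.Finite.pi (t := fun j : Fin n =>
          {c | GAK b k0 (qk (τ j)) c ≠ 0} ∪ {qk (τ j)}) (fun j =>
            (ih (hτ j)).1.union (Set.finite_singleton _))).image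
              (h_Nd l false 0 v [] a))).subset ?_
      intro x hx
      rcases key x hx with rfl | ⟨i, c, rfl, hc⟩
      · exact Or.inl rfl
      · refine Or.inr (Set.mem_iUnion.2 ⟨i, c, fun j _ => ?_, rfl⟩)
        have := hc j
        split_ifs at this with h
        · exact Or.inl this
        · exact Or.inr this
    · intro x hx
      rcases key x hx with rfl | ⟨i, c, rfl, hc⟩
      · exact h_Shape_T0g' hg b k0
      · refine h_Shape_T0g (fun j => (h_ShQ_qout _).2 ?_)
        have := hc j
        split_ifs at this with h
        · exact (ih (hτ j)).2 _ this
        · rw [this]; exact hg j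

lemma h_C2 {Mloc : QTree d → Ser d} (hM : MlocEqs Mloc)
    {m : ℕ} : ∀ {t : Tree d}, Tree.ShapeN false false false m t →
      ∀ c, Mloc (qk t) c ≠ 0 → h_ShQ true false false c := by
  induction m with
  | zero => intro t h; exact h.elim
  | succ m ih =>
    intro t h x hx
    obtain ⟨l, v, n, a, τ, rfl, hτ⟩ := h_decomp h
    rw [h_Mloc hM (fun i => h_T0_g (hτ i))] at hx
    obtain ⟨c, hc, hc'⟩ := h_nP_ne (right_ne_zero_of_mul hx)
    rw [hc]
    refine h_Shape_node (Or.inr rfl) (Or.inl rfl) ?_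
    intro b hb
    rw [List.nil_append, List.mem_ofFn] at hb
    obtain ⟨i, rfl⟩ := hb
    exact Or.inl ⟨_, _, rfl, (h_ShQ_qout _).2 (ih (hτ i) _ (hc' i))⟩

lemma h_lin {n : ℕ} (l g : Bool) (k : Multi d) (v : Bool) (pre : List (Branch d))
    (a : Fin n → Multi d) (F : Fin n → Ser d) (i : Fin n) {K : Type*} (s : Finset K)
    (w : K → ℝ) (T : K → Ser d) (x : QTree d) :
    h_nP l g k v pre a (fun j => if j = i then (fun y => ∑ q ∈ s, w q * T q y) else F j) x =
      ∑ q ∈ s, w q * h_nP l g k v pre a (fun j => if j = i then T q else F j) x := by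
  have key : ∀ (S : Ser d) (c : Fin n → QTree d),
      ∏ j, (if j = i then S else F j) (c j) =
        S (c i) * ∏ j ∈ Finset.univ.erase i, F j (c j) := by
    intro S c
    rw [← Finset.mul_prod_erase Finset.univ _ (Finset.mem_univ i), if_pos rfl]
    congr 1
    refine Finset.prod_congr rfl fun j hj => ?_
    rw [if_neg (Finset.ne_of_mem_erase hj)]
  simp only [h_nP, key, Finset.mul_sum, Finset.sum_mul]
  rw [Finset.sum_comm]
  refine Finset.sum_congr rfl fun q _ => Finset.sum_congr rfl fun c _ => ?_
  ring

lemma h_binom (r j : Multi d) :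
    1 / (mfact (r + j) : ℝ) * (mbinom (r + j) j : ℝ) =
      1 / (mfact j : ℝ) * (1 / (mfact r : ℝ)) := by
  have hpos : ∀ k : Multi d, (mfact k : ℝ) ≠ 0 := fun k => by
    have : mfact k ≠ 0 := Finset.prod_ne_zero_iff.2 fun i _ => Nat.factorial_ne_zero _
    exact_mod_cast this
  have h : mbinom (r + j) j * mfact r * mfact j = mfact (r + j) := by
    simp only [mbinom, mfact, ← Finset.prod_mul_distrib, Pi.add_apply]
    refine Finset.prod_congr rfl fun i _ => ?_
    exact Nat.add_choose_mul_factorial_mul_factorial (r i) (j i)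
  have h' : (mbinom (r + j) j : ℝ) * mfact r * mfact j = mfact (r + j) := by exact_mod_cast h
  rw [← h']
  have h1 := hpos r
  have h2 := hpos j
  have h3 : (mbinom (r + j) j : ℝ) ≠ 0 := by
    intro h0
    have := hpos (r + j)
    rw [← h', h0] at this
    simp at this
  field_simp

/-- Weight. -/
def h_w {n : ℕ} (F : Fin n → Ser d) (p : Multi d × (Fin n → QTree d)) : ℝ :=
  1 / (mfact p.1 : ℝ) * ∏ i, F i (p.2 i)

lemma h_R {n : ℕ} (l v : Bool) (a : Fin n → Multi d) (F : Fin n → Ser d) (b j : Multi d)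
    (x : QTree d) :
    (Function.support fun p : Multi d × (Fin n → QTree d) => h_w F p *
      ((mbinom p.1 j : ℝ) *
        if x = h_Nd l false (p.1 - j) v [Tree.grayB b j] a p.2 then 1 else 0)).Finite ∧
    ∑ᶠ p : Multi d × (Fin n → QTree d), h_w F p *
      ((mbinom p.1 j : ℝ) *
        if x = h_Nd l false (p.1 - j) v [Tree.grayB b j] a p.2 then 1 else 0) =
      1 / (mfact j : ℝ) * (1 / (mfact (h_rk x) : ℝ) *
        h_nP l false (h_rk x) v [Tree.grayB b j] a F x) := by
  have hinj : Function.Injective (fun c : Fin n → QTree d => (h_rk x + j, c)) :=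
    fun c c' h => (Prod.mk.inj h).2
  have hsub : (Function.support fun p : Multi d × (Fin n → QTree d) => h_w F p *
      ((mbinom p.1 j : ℝ) *
        if x = h_Nd l false (p.1 - j) v [Tree.grayB b j] a p.2 then 1 else 0)) ⊆
      (((h_fib_finite l false (h_rk x) v [Tree.grayB b j] a x).toFinset.map
        ⟨_, hinj⟩ : Finset (Multi d × (Fin n → QTree d))) : Set _) := by
    rintro ⟨k, c⟩ hp
    simp only [Function.mem_support] at hp
    have hp2 := right_ne_zero_of_mul hp
    have hx : x = h_Nd l false (k - j) v [Tree.grayB b j] a c := by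
      by_contra h
      simp [h] at hp2
    have hb : mbinom k j ≠ 0 := by exact_mod_cast left_ne_zero_of_mul hp2
    have hjk : j ≤ k := by
      intro i
      have := Finset.prod_ne_zero_iff.1 hb i (Finset.mem_univ _)
      by_contra h
      exact this (Nat.choose_eq_zero_of_lt (not_le.1 h))
    have hr : h_rk x = k - j := by rw [hx, h_rk_Nd]
    simp only [Finset.coe_map, Set.Finite.coe_toFinset, Function.Embedding.coeFn_mk]
    refine ⟨c, ?_, ?_⟩
    · change x = _
      rw [hr]; exact hx
    · simp only [hr, tsub_add_cancel_of_le hjk]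
  refine ⟨(Finset.finite_toSet _).subset hsub, ?_⟩
  rw [finsum_eq_finsetSum_of_support_subset _ hsub, Finset.sum_map, h_nP, ← mul_assoc,
    Finset.mul_sum]
  refine Finset.sum_congr rfl fun c hc => ?_
  have hc' : x = h_Nd l false (h_rk x) v [Tree.grayB b j] a c := by
    rwa [Set.Finite.mem_toFinset] at hc
  simp only [Function.Embedding.coeFn_mk, h_w, add_tsub_cancel_right, if_pos hc']
  rw [← h_binom]
  ring

lemma h_I {GA : Multi d → QTree d → Ser d} {n : ℕ} (l v : Bool) (a : Fin n → Multi d)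
    (F : Fin n → Ser d) (b : Multi d) (i : Fin n) (x : QTree d)
    (hf : ∀ i y, {c | F i c * GA b c y ≠ 0}.Finite) :
    (Function.support fun p : Multi d × (Fin n → QTree d) => h_w F p *
      h_nP l false p.1 v [] a (fun j => if j = i then GA b (p.2 j) else dqC (p.2 j)) x).Finite ∧
    ∑ᶠ p : Multi d × (Fin n → QTree d), h_w F p *
      h_nP l false p.1 v [] a (fun j => if j = i then GA b (p.2 j) else dqC (p.2 j)) x =
      1 / (mfact (h_rk x) : ℝ) * h_nP l false (h_rk x) v [] a
        (fun j => if j = i then extT (GA b) (F j) else F j) x := by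
  have hG : ∀ c : Fin n → QTree d, (fun j => if j = i then GA b (c j) else dqC (c j)) =
      fun j => (if j = i then GA b else dqC) (c j) := by
    intro c
    funext j
    split_ifs <;> rfl
  obtain ⟨h1, h2⟩ := h_subst l false (h_rk x) v [] a F (fun j => if j = i then GA b else dqC) x
    (by
      intro j y
      split_ifs with h
      · exact hf j y
      · refine (Set.finite_singleton y).subset ?_
        intro c hc
        simp only [Set.mem_ofPred_eq] at hc
        by_contra hne
        have : ¬ y = c := fun h => hne h.symm
        simp [dqC, this] at hc)
  have hE : (fun j => extT ((if j = i then GA b else dqC : QTree d → Ser d)) (F j)) =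
      fun j => if j = i then extT (GA b) (F j) else F j := by
    funext j
    split_ifs
    · rfl
    · exact h_extT_dqC _
  rw [hE] at h2
  have hk : ∀ p : Multi d × (Fin n → QTree d), h_w F p *
      h_nP l false p.1 v [] a (fun j => if j = i then GA b (p.2 j) else dqC (p.2 j)) x ≠ 0 →
      p.1 = h_rk x := by
    intro p hp
    by_contra h
    rw [h_nP_rk h, mul_zero] at hp
    exact hp rfl
  constructor
  · refine (h1.image fun c => (h_rk x, c)).subset ?_
    rintro ⟨k, c⟩ hp
    have := hk _ hp
    simp only at this
    subst this
    refine ⟨c, ?_, rfl⟩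
    simp only [Function.mem_support, h_w, hG] at hp
    rw [mul_assoc] at hp
    exact right_ne_zero_of_mul hp
  · rw [h2, mul_finsum]
    refine h_fsinj (fun c => (h_rk x, c)) (fun c c' h => (Prod.mk.inj h).2) _ _ ?_ ?_
    · rintro ⟨k, c⟩ hp
      by_contra h
      have := hk _ h
      simp only at this
      subst this
      exact hp ⟨c, rfl⟩
    · intro c
      simp only [h_w, hG, mul_assoc]

lemma h_L {GA : Multi d → QTree d → Ser d} (hGA : GAEqs GA) {n : ℕ} (l v : Bool)
    (a : Fin n → Multi d) (F : Fin n → Ser d) (b : Multi d) (x : QTree d)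
    (hX : ∀ i c, F i c ≠ 0 → h_ShQ true false false c)
    (hf : ∀ i y, {c | F i c * GA b c y ≠ 0}.Finite) :
    {p : Multi d × (Fin n → QTree d) |
      h_w F p * GA b (h_Nd l false p.1 v [] a p.2) x ≠ 0}.Finite ∧
    ∑ᶠ p : Multi d × (Fin n → QTree d), h_w F p * GA b (h_Nd l false p.1 v [] a p.2) x =
      (if v = true then (1 : ℝ) else 0) * (∑ j ∈ Finset.Iic b, 1 / (mfact j : ℝ) *
        (1 / (mfact (h_rk x) : ℝ) *
          h_nP l false (h_rk x) v [Tree.grayB (b - j) j] a F x)) +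
      ∑ i : Fin n, 1 / (mfact (h_rk x) : ℝ) * h_nP l false (h_rk x) v [] a
        (fun j => if j = i then extT (GA b) (F j) else F j) x := by
  have key : ∀ p : Multi d × (Fin n → QTree d),
      h_w F p * GA b (h_Nd l false p.1 v [] a p.2) x =
      (if v = true then (1 : ℝ) else 0) * (∑ j ∈ Finset.Iic b, h_w F p *
        ((mbinom p.1 j : ℝ) *
          if x = h_Nd l false (p.1 - j) v [Tree.grayB (b - j) j] a p.2 then 1 else 0)) +
      ∑ i : Fin n, h_w F p *
        h_nP l false p.1 v [] a (fun j => if j = i then GA b (p.2 j) else dqC (p.2 j)) x := by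
    intro p
    by_cases hp : h_w F p = 0
    · simp [hp]
    · have : ∀ i, h_ShQ true false false (p.2 i) := fun i =>
        hX i _ (Finset.prod_ne_zero_iff.1 (right_ne_zero_of_mul hp) i (Finset.mem_univ _))
      rw [h_GA hGA this, ← Finset.mul_sum, ← Finset.mul_sum]
      ring
  have hR := fun j => h_R l v a F (b - j) j x
  have hI := fun i => h_I (GA := GA) l v a F b i x hf
  have f1 : (Function.support fun p : Multi d × (Fin n → QTree d) =>
      (if v = true then (1 : ℝ) else 0) * (∑ j ∈ Finset.Iic b, h_w F p *
        ((mbinom p.1 j : ℝ) *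
          if x = h_Nd l false (p.1 - j) v [Tree.grayB (b - j) j] a p.2 then 1 else 0))).Finite := by
    refine (Set.Finite.biUnion (Finset.Iic b).finite_toSet (fun j _ => (hR j).1)).subset ?_
    intro p hp
    obtain ⟨j, hj, h⟩ := Finset.exists_ne_zero_of_sum_ne_zero (right_ne_zero_of_mul hp)
    exact Set.mem_biUnion hj h
  have f2 : (Function.support fun p : Multi d × (Fin n → QTree d) =>
      ∑ i : Fin n, h_w F p *
        h_nP l false p.1 v [] a
          (fun j => if j = i then GA b (p.2 j) else dqC (p.2 j)) x).Finite := by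
    refine (Set.finite_iUnion (fun i => (hI i).1)).subset ?_
    intro p hp
    obtain ⟨i, -, h⟩ := Finset.exists_ne_zero_of_sum_ne_zero hp
    exact Set.mem_iUnion.2 ⟨i, h⟩
  simp only [key]
  constructor
  · exact (f1.union f2).subset (Function.support_add _ _)
  · rw [finsum_add_distrib f1 f2, ← mul_finsum, finsum_sum_comm _ _ (fun j _ => (hR j).1),
      finsum_sum_comm _ _ (fun i _ => (hI i).1)]
    congr 1
    · congr 1
      exact Finset.sum_congr rfl fun j _ => (hR j).2
    · exact Finset.sum_congr rfl fun i _ => (hI i).2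

lemma h_Mpush {Mloc : QTree d → Ser d} (hM : MlocEqs Mloc) {n : ℕ} {l v : Bool}
    {a : Fin n → Multi d} {τ : Fin n → Tree d} (hτ : ∀ i, Tree.IsT0g (τ i)) (x : QTree d) :
    Mloc (qk (Tree.node l false 0 v (List.ofFn fun i => Tree.intB (a i) (τ i)))) x =
      ∑ᶠ p : Multi d × (Fin n → QTree d), h_w (fun i => Mloc (qk (τ i))) p *
        if x = h_Nd l false p.1 v [] a p.2 then 1 else 0 := by
  rw [h_Mloc hM hτ, h_nP_eq, mul_finsum]
  symm
  refine h_fsinj (fun c => (h_rk x, c)) (fun c c' h => (Prod.mk.inj h).2) _ _ ?_ ?_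
  · rintro ⟨k, c⟩ hp
    rw [if_neg, mul_zero]
    intro h
    refine hp ⟨c, ?_⟩
    rw [h, h_rk_Nd]
  · intro c
    simp only [h_w, mul_assoc]

lemma h_LHS {Mloc : QTree d → Ser d} (hM : MlocEqs Mloc)
    {GA : Multi d → QTree d → Ser d} (hGA : GAEqs GA) {n : ℕ} {l v : Bool}
    {a : Fin n → Multi d} {τ : Fin n → Tree d} (hτ : ∀ i, Tree.IsT0g (τ i)) (b : Multi d)
    (x : QTree d)
    (hX : ∀ i c, Mloc (qk (τ i)) c ≠ 0 → h_ShQ true false false c)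
    (hf : ∀ i y, {c | Mloc (qk (τ i)) c * GA b c y ≠ 0}.Finite) :
    {c | Mloc (qk (Tree.node l false 0 v (List.ofFn fun i => Tree.intB (a i) (τ i)))) c *
      GA b c x ≠ 0}.Finite ∧
    extT (GA b) (Mloc (qk (Tree.node l false 0 v
      (List.ofFn fun i => Tree.intB (a i) (τ i))))) x =
      (if v = true then (1 : ℝ) else 0) * (∑ j ∈ Finset.Iic b, 1 / (mfact j : ℝ) *
        (1 / (mfact (h_rk x) : ℝ) * h_nP l false (h_rk x) v [Tree.grayB (b - j) j] a
          (fun i => Mloc (qk (τ i))) x)) +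
      ∑ i : Fin n, 1 / (mfact (h_rk x) : ℝ) * h_nP l false (h_rk x) v [] a
        (fun j => if j = i then extT (GA b) (Mloc (qk (τ j))) else Mloc (qk (τ j))) x := by
  obtain ⟨h1, h2⟩ := h_L hGA l v a (fun i => Mloc (qk (τ i))) b x hX hf
  constructor
  · refine (h1.image fun p => h_Nd l false p.1 v [] a p.2).subset ?_
    intro c hc
    simp only [Set.mem_ofPred_eq, h_Mpush hM hτ, finsum_mul] at hc
    obtain ⟨p, hp⟩ : ∃ p : Multi d × (Fin n → QTree d), h_w (fun i => Mloc (qk (τ i))) p *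
        (if c = h_Nd l false p.1 v [] a p.2 then 1 else 0) * GA b c x ≠ 0 := by
      by_contra h
      push Not at h
      exact hc (by rw [finsum_congr h, finsum_zero])
    have hcp : c = h_Nd l false p.1 v [] a p.2 := by
      by_contra h
      simp [h] at hp
    refine ⟨p, ?_, hcp.symm⟩
    rw [if_pos hcp, mul_one, hcp] at hp
    exact hp
  · rw [← h2, ← h_push (h_w fun i => Mloc (qk (τ i)))
      (fun p => h_Nd l false p.1 v [] a p.2) (fun c => GA b c x) h1]
    exact finsum_congr fun c => by rw [h_Mpush hM hτ]

lemma h_C3 {Mloc : QTree d → Ser d} (hM : MlocEqs Mloc)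
    {GA : Multi d → QTree d → Ser d} (hGA : GAEqs GA) (b : Multi d)
    {m : ℕ} : ∀ {t : Tree d}, Tree.ShapeN false false false m t →
      ∀ x, {c | Mloc (qk t) c * GA b c x ≠ 0}.Finite := by
  induction m with
  | zero => intro t h; exact h.elim
  | succ m ih =>
    intro t h x
    obtain ⟨l, v, n, a, τ, rfl, hτ⟩ := h_decomp h
    exact (h_LHS hM hGA (fun i => h_T0_g (hτ i)) b x (fun i => h_C2 hM (hτ i))
      (fun i => ih (hτ i))).1

lemma h_RHS_slot {Mloc : QTree d → Ser d} (hM : MlocEqs Mloc) {n : ℕ} (l v : Bool)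
    (a : Fin n → Multi d) (S : Fin n → Ser d)
    (hS : ∀ i, {c | S i c ≠ 0}.Finite) (hg : ∀ i c, S i c ≠ 0 → h_ShQ false true false c)
    (x : QTree d) :
    extT Mloc (h_nP l false 0 v [] a S) x =
      1 / (mfact (h_rk x) : ℝ) *
        h_nP l false (h_rk x) v [] a (fun i => extT Mloc (S i)) x := by
  have hfin : {c : Fin n → QTree d | (∏ i, S i (c i)) ≠ 0}.Finite := (h_prod_finsum S hS).1
  have e1 := h_push (fun c : Fin n → QTree d => ∏ i, S i (c i))
    (fun c => h_Nd l false 0 v [] a c) (fun c => Mloc c x)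
    (hfin.subset fun c hc => left_ne_zero_of_mul hc)
  have e2 : extT Mloc (h_nP l false 0 v [] a S) x = ∑ᶠ c : Fin n → QTree d,
      (∏ i, S i (c i)) * Mloc (h_Nd l false 0 v [] a c) x := by
    rw [← e1]
    exact finsum_congr fun c => by rw [h_nP_eq]
  rw [e2, (h_subst l false (h_rk x) v [] a S (fun _ => Mloc) x
    (fun i y => (hS i).subset fun c hc => left_ne_zero_of_mul hc)).2, mul_finsum]
  refine finsum_congr fun c => ?_
  by_cases h0 : ∏ i, S i (c i) = 0
  · simp [h0]
  · have hc : ∀ i, Tree.IsT0g (qout (c i)) := fun i =>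
      (h_ShQ_qout _).2 (hg i _ (Finset.prod_ne_zero_iff.1 h0 i (Finset.mem_univ _)))
    have := h_Mloc hM (l := l) (g := false) (v := v) (a := a) hc x
    simp only [h_qk_qout] at this
    rw [h_Nd, List.nil_append, this]
    ring

lemma h_extT_add (G : QTree d → Ser d) {n : ℕ} (A : Ser d) (r : ℝ) (B : Fin n → Ser d)
    (hA : {c | A c ≠ 0}.Finite) (hB : ∀ i, {c | B i c ≠ 0}.Finite) (x : QTree d) :
    extT G (fun y => r * A y + ∑ i, B i y) x = r * extT G A x + ∑ i, extT G (B i) x := by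
  have e : ∀ c, (r * A c + ∑ i, B i c) * G c x = r * (A c * G c x) + ∑ i, B i c * G c x := by
    intro c
    rw [add_mul, Finset.sum_mul, mul_assoc]
  simp only [extT, e]
  have hB' : ∀ i, (Function.support fun c => B i c * G c x).Finite := fun i =>
    (hB i).subset fun c hc => left_ne_zero_of_mul hc
  rw [finsum_add_distrib, mul_finsum, finsum_sum_comm _ _ fun i _ => hB' i]
  · exact hA.subset fun c hc => left_ne_zero_of_mul (right_ne_zero_of_mul hc)
  · refine (Set.finite_iUnion hB').subset ?_
    intro p hp
    obtain ⟨i, -, h⟩ := Finset.exists_ne_zero_of_sum_ne_zero hp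
    exact Set.mem_iUnion.2 ⟨i, h⟩

lemma h_RHS {Mloc : QTree d → Ser d} (hM : MlocEqs Mloc)
    {GAK : Multi d → Multi d → QTree d → Ser d} (hG : GAKEqs GAK) {n m : ℕ} {l v : Bool}
    {a : Fin n → Multi d} {τ : Fin n → Tree d}
    (hτ : ∀ i, Tree.ShapeN false false false m (τ i)) (b k0 : Multi d) (x : QTree d) :
    extT Mloc (GAK b k0 (qk (Tree.node l false 0 v
      (List.ofFn fun i => Tree.intB (a i) (τ i))))) x =
      (if v = true then (1 : ℝ) else 0) *
        (1 / (mfact (h_rk x) : ℝ) * h_nP l false (h_rk x) v [Tree.grayB b k0] a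
          (fun i => Mloc (qk (τ i))) x) +
      ∑ i : Fin n, 1 / (mfact (h_rk x) : ℝ) * h_nP l false (h_rk x) v [] a
        (fun j => if j = i then extT Mloc (GAK b k0 (qk (τ j))) else Mloc (qk (τ j))) x := by
  have hg := fun i => h_T0_g (hτ i)
  have dfin : ∀ t : Tree d, {c | dqT t c ≠ 0}.Finite := fun t =>
    (Set.finite_singleton (qk t)).subset fun c hc => by
      by_contra h
      have h' : ¬ c = qk t := h
      simp [dqT, h'] at hc
  have hS : ∀ i j : Fin n, {c | (if j = i then GAK b k0 (qk (τ j)) else dqT (τ j)) c ≠ 0}.Finite := by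
    intro i j
    split_ifs
    · exact (h_C1 hG b k0 (hτ j)).1
    · exact dfin _
  have hS' : ∀ i j : Fin n, ∀ c, (if j = i then GAK b k0 (qk (τ j)) else dqT (τ j)) c ≠ 0 →
      h_ShQ false true false c := by
    intro i j c hc
    split_ifs at hc
    · exact (h_C1 hG b k0 (hτ j)).2 c hc
    · have : c = qk (τ j) := by
        by_contra h
        simp [dqT, h] at hc
      rw [this]
      exact hg j
  have e := funext fun y => h_GAK hG (l := l) (v := v) (b := b) (k0 := k0) (a := a) hg y
  rw [e, h_extT_add]
  · rw [h_extT_dqT, h_Mloc_gray hM hg]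
    congr 1
    refine Finset.sum_congr rfl fun i _ => ?_
    rw [h_RHS_slot hM l v a _ (hS i) (hS' i)]
    congr 2
    funext j
    split_ifs
    · rfl
    · exact h_extT_dqT _ _
  · exact dfin _
  · intro i
    refine ((Set.Finite.pi (hS i)).image (h_Nd l false 0 v [] a)).subset ?_
    intro c hc
    obtain ⟨c', h1, h2⟩ := h_nP_ne hc
    exact ⟨c', fun j _ => h2 j, h1.symm⟩

lemma h_C4 {Mloc : QTree d → Ser d} (hM : MlocEqs Mloc)
    {GA : Multi d → QTree d → Ser d} (hGA : GAEqs GA)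
    {GAK : Multi d → Multi d → QTree d → Ser d} (hG : GAKEqs GAK) (b : Multi d)
    {m : ℕ} : ∀ {t : Tree d}, Tree.ShapeN false false false m t →
      extT (GA b) (Mloc (qk t)) = fun x => ∑ k ∈ Finset.Iic b,
        1 / (mfact k : ℝ) * extT Mloc (GAK (b - k) k (qk t)) x := by
  induction m with
  | zero => intro t h; exact h.elim
  | succ m ih =>
    intro t h
    obtain ⟨l, v, n, a, τ, rfl, hτ⟩ := h_decomp h
    funext x
    rw [(h_LHS hM hGA (fun i => h_T0_g (hτ i)) b x (fun i => h_C2 hM (hτ i))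
      (fun i => h_C3 hM hGA b (hτ i))).2]
    simp only [h_RHS hM hG hτ, mul_add, Finset.sum_add_distrib]
    congr 1
    · rw [Finset.mul_sum]
      refine Finset.sum_congr rfl fun k _ => ?_
      ring
    · simp only [Finset.mul_sum]
      rw [Finset.sum_comm]
      refine Finset.sum_congr rfl fun i _ => ?_
      have e : (fun j => if j = i then extT (GA b) (Mloc (qk (τ j))) else Mloc (qk (τ j))) =
          fun j => if j = i then (fun y => ∑ k ∈ Finset.Iic b,
            1 / (mfact k : ℝ) * extT Mloc (GAK (b - k) k (qk (τ i))) y) else Mloc (qk (τ j)) := by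
        funext j
        split_ifs with hj
        · subst hj
          exact ih (hτ j)
        · rfl
      rw [e, h_lin, Finset.mul_sum]
      refine Finset.sum_congr rfl fun k _ => ?_
      have e' : (fun j => if j = i then extT Mloc (GAK (b - k) k (qk (τ i)))
          else Mloc (qk (τ j))) = fun j => if j = i then extT Mloc (GAK (b - k) k (qk (τ j)))
          else Mloc (qk (τ j)) := by
        funext j
        split_ifs with hj
        · rw [hj]
        · rfl
      rw [e']
      ring

end Helpers

/-- Lemma `commutggraft`.  For every `a ∈ ℕ^{d+1}`, on `𝒯_0`
one has `gray↷_a ∘ M_loc = M_loc ∘ (Σ_{k} (1/k!) gray↷_{a−k,k})`, where the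
terms with `a − k ∉ ℕ^{d+1}` (i.e. `k ≰ a`) are set to zero, and both sides
take values in the space of (possibly infinite) formal linear combinations of
decorated trees.  The maps `M_loc`, `gray↷_a`, `gray↷_{a,k}` are characterised
by their defining recursions `MlocEqs`, `GAEqs`, `GAKEqs`. -/
theorem gray_grafting_commutes_with_localisation {d : ℕ}
    (Mloc : QTree d → Ser d) (GA : Multi d → QTree d → Ser d)
    (GAK : Multi d → Multi d → QTree d → Ser d)
    (hMloc : MlocEqs Mloc) (hGA : GAEqs GA) (hGAK : GAKEqs GAK) :
    ∀ (a : Multi d) (t : Tree d), Tree.IsT0 t →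
      extT (GA a) (Mloc (qk t)) = fun x =>
        ∑ᶠ k : Multi d,
          if k ≤ a then (1 / (mfact k : ℝ)) * extT Mloc (GAK (a - k) k (qk t)) x
          else 0 := by
  intro a t ht
  obtain ⟨m, hm⟩ := ht
  rw [h_C4 hMloc hGA hGAK a hm]
  funext x
  rw [finsum_eq_finsetSum_of_support_subset (s := Finset.Iic a)]
  · refine Finset.sum_congr rfl fun k hk => ?_
    rw [Finset.mem_Iic] at hk
    rw [if_pos hk]
  · intro k hk
    simp only [Finset.coe_Iic, Set.mem_Iic]
    by_contra h
    simp [h] at hk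

end Flow
end
end

section
/- For every τ ∈ T_0 one can write ↑_μ τ = Σ_i (S(τ)/S(τ_i)) τ_i, where the τ_i are the pairwise distinct trees in T_1 of the form ↑_μ^e τ for e ∈ E_τ; equivalently, each distinct tree σ of the form ↑_μ^e τ occurs in ↑_μ τ with integer coefficient exactly S(τ)/S(σ). -/
noncomputable section
open scoped BigOperators
attribute [local instance] Classical.propDecidable

namespace Flow

namespace Tree
variable {d : ℕ}

def nd (l g : Bool) (k : Multi d) (v : Bool) {n : ℕ} (f : Fin n → Branch d) : Tree d :=
  .node l g k v (List.ofFn f)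

theorem sizeOf_child {l g : Bool} {k : Multi d} {v : Bool} {bs : List (Branch d)}
    {pa : Bool × Multi d} {t : Tree d} (h : (Sum.inl (pa, t) : Branch d) ∈ bs) :
    sizeOf t < sizeOf (Tree.node l g k v bs) := by
  have := List.sizeOf_lt_of_mem h
  simp at this ⊢
  omega

theorem node_eq_nd (l g : Bool) (k : Multi d) (v : Bool) (bs : List (Branch d)) :
    Tree.node l g k v bs = nd l g k v bs.get := by
  simp [nd]

theorem ind {P : Tree d → Prop}
    (H : ∀ l g k v n (f : Fin n → Branch d),
      (∀ i pa t, f i = Sum.inl (pa, t) → P t) → P (nd l g k v f)) : ∀ t, P t := by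
  intro t
  induction hn : sizeOf t using Nat.strong_induction_on generalizing t with
  | _ n ih =>
    obtain ⟨l, g, k, v, bs⟩ := t
    rw [node_eq_nd]
    apply H
    intro i pa t h
    refine ih (sizeOf t) ?_ t rfl
    rw [← hn]
    apply sizeOf_child (pa := pa)
    rw [← h]
    exact List.get_mem _ _

theorem BRel_mono {r r' : Tree d → Tree d → Prop} (h : ∀ s t, r s t → r' s t) (b b' : Branch d) :
    BRel r b b' → BRel r' b b' := by
  rcases b with ⟨⟨p, a⟩, t⟩ | x <;> rcases b' with ⟨⟨p', a'⟩, t'⟩ | x' <;> simp [BRel]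
  intro h1 h2 h3
  exact ⟨h1, h2, h _ _ h3⟩

theorem TEquivN_succ (n : ℕ) (s t : Tree d) : TEquivN n s t → TEquivN (n+1) s t := by
  induction n generalizing s t with
  | zero => simp [TEquivN]
  | succ n ih =>
    obtain ⟨l, g, k, v, bs⟩ := s
    obtain ⟨l', g', k', v', bs'⟩ := t
    rw [TEquivN, TEquivN]
    rintro ⟨h1, h2, h3, h4, e, he⟩
    exact ⟨h1, h2, h3, h4, e, fun i => BRel_mono ih _ _ (he i)⟩

theorem TEquivN_mono {n m : ℕ} (h : n ≤ m) (s t : Tree d) : TEquivN n s t → TEquivN m s t := by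
  induction h with
  | refl => exact id
  | step _ ih => exact fun h => TEquivN_succ _ _ _ (ih h)

theorem BRel_TEquiv_ex {b b' : Branch d} (h : BRel TEquiv b b') : ∃ n, BRel (TEquivN n) b b' := by
  rcases b with ⟨⟨p, a⟩, t⟩ | x <;> rcases b' with ⟨⟨p', a'⟩, t'⟩ | x' <;>
    simp only [BRel, exists_const] at h ⊢
  · obtain ⟨h1, h2, n, h3⟩ := h
    exact ⟨n, h1, h2, h3⟩
  · exact h

theorem TEquiv_node {l g : Bool} {k : Multi d} {v : Bool} {bs : List (Branch d)}
    {l' g' : Bool} {k' : Multi d} {v' : Bool} {bs' : List (Branch d)} :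
    TEquiv (.node l g k v bs) (.node l' g' k' v' bs') ↔
      l = l' ∧ g = g' ∧ k = k' ∧ v = v' ∧
        ∃ e : Fin bs.length ≃ Fin bs'.length,
          ∀ i : Fin bs.length, BRel TEquiv (bs.get i) (bs'.get (e i)) := by
  constructor
  · rintro ⟨n, h⟩
    cases n with
    | zero => simp [TEquivN] at h
    | succ n =>
      rw [TEquivN] at h
      obtain ⟨h1, h2, h3, h4, e, he⟩ := h
      exact ⟨h1, h2, h3, h4, e, fun i => BRel_mono (fun s t h => ⟨n, h⟩) _ _ (he i)⟩
  · rintro ⟨h1, h2, h3, h4, e, he⟩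
    choose N hN using fun i => BRel_TEquiv_ex (he i)
    refine ⟨Finset.univ.sup N + 1, ?_⟩
    rw [TEquivN]
    exact ⟨h1, h2, h3, h4, e, fun i =>
      BRel_mono (TEquivN_mono (Finset.le_sup (Finset.mem_univ i))) _ _ (hN i)⟩

theorem TEquiv_nd {l g : Bool} {k : Multi d} {v : Bool} {n m : ℕ} {f : Fin n → Branch d}
    {l' g' : Bool} {k' : Multi d} {v' : Bool} {f' : Fin m → Branch d} :
    TEquiv (nd l g k v f) (nd l' g' k' v' f') ↔
      l = l' ∧ g = g' ∧ k = k' ∧ v = v' ∧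
        ∃ e : Fin n ≃ Fin m, ∀ i, BRel TEquiv (f i) (f' (e i)) := by
  unfold nd
  rw [TEquiv_node]
  have hn : (List.ofFn f).length = n := List.length_ofFn
  have hm : (List.ofFn f').length = m := List.length_ofFn
  refine and_congr_right fun _ => and_congr_right fun _ => and_congr_right fun _ =>
    and_congr_right fun _ => ?_
  constructor
  · rintro ⟨e, he⟩
    refine ⟨(finCongr hn).symm.trans (e.trans (finCongr hm)), fun i => ?_⟩
    have := he ((finCongr hn).symm i)
    simp at this ⊢
    exact this
  · rintro ⟨e, he⟩
    refine ⟨(finCongr hn).trans (e.trans (finCongr hm).symm), fun i => ?_⟩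
    have := he ((finCongr hn) i)
    simp at this ⊢
    exact this

theorem TEquiv_refl (t : Tree d) : TEquiv t t := by
  induction t using ind with
  | H l g k v n f ih =>
    rw [TEquiv_nd]
    refine ⟨rfl, rfl, rfl, rfl, Equiv.refl _, fun i => ?_⟩
    have := ih i
    rcases h : f i with ⟨⟨p, a⟩, t⟩ | x
    · simpa [BRel, h] using ih i _ _ h
    · simp [BRel, h]

theorem TEquiv_symm (t : Tree d) : ∀ t', TEquiv t t' → TEquiv t' t := by
  induction t using ind with
  | H l g k v n f ih =>
    intro t'
    obtain ⟨l', g', k', v', bs'⟩ := t'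
    rw [node_eq_nd, TEquiv_nd, TEquiv_nd]
    rintro ⟨h1, h2, h3, h4, e, he⟩
    refine ⟨h1.symm, h2.symm, h3.symm, h4.symm, e.symm, fun i => ?_⟩
    have := he (e.symm i)
    rw [Equiv.apply_symm_apply] at this
    revert this
    rcases h : f (e.symm i) with ⟨⟨p, a⟩, t⟩ | x <;>
      rcases h' : bs'.get i with ⟨⟨p', a'⟩, t'⟩ | x' <;> simp only [BRel]
    · rintro ⟨h1, h2, h3⟩
      exact ⟨h1.symm, h2.symm, ih _ _ _ h _ h3⟩
    · exact id
    · exact id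
    · exact Eq.symm

theorem TEquiv_trans (t : Tree d) : ∀ t' t'', TEquiv t t' → TEquiv t' t'' → TEquiv t t'' := by
  induction t using ind with
  | H l g k v n f ih =>
    intro t' t''
    obtain ⟨l', g', k', v', bs'⟩ := t'
    obtain ⟨l'', g'', k'', v'', bs''⟩ := t''
    rw [node_eq_nd, node_eq_nd, TEquiv_nd, TEquiv_nd, TEquiv_nd]
    rintro ⟨h1, h2, h3, h4, e, he⟩ ⟨k1, k2, k3, k4, e', he'⟩
    refine ⟨h1.trans k1, h2.trans k2, h3.trans k3, h4.trans k4, e.trans e', fun i => ?_⟩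
    have A := he i
    have B := he' (e i)
    simp only [Equiv.trans_apply]
    revert A B
    rcases h : f i with ⟨⟨p, a⟩, t⟩ | x <;>
      rcases h' : bs'.get (e i) with ⟨⟨p', a'⟩, t'⟩ | x' <;>
      rcases h'' : bs''.get (e' (e i)) with ⟨⟨p'', a''⟩, t''⟩ | x'' <;> simp only [BRel]
    · rintro ⟨h1, h2, h3⟩ ⟨k1, k2, k3⟩
      exact ⟨h1.trans k1, h2.trans k2, ih _ _ _ h _ _ h3 k3⟩
    all_goals first | exact fun a b => a.elim | exact fun a b => b.elim | exact Eq.trans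

theorem BRel_symm {b b' : Branch d} : BRel TEquiv b b' → BRel TEquiv b' b := by
  rcases b with ⟨⟨p, a⟩, t⟩ | x <;> rcases b' with ⟨⟨p', a'⟩, t'⟩ | x' <;> simp only [BRel]
  · rintro ⟨h1, h2, h3⟩
    exact ⟨h1.symm, h2.symm, TEquiv_symm _ _ h3⟩
  · exact id
  · exact id
  · exact Eq.symm

theorem BRel_trans {b b' b'' : Branch d} :
    BRel TEquiv b b' → BRel TEquiv b' b'' → BRel TEquiv b b'' := by
  rcases b with ⟨⟨p, a⟩, t⟩ | x <;> rcases b' with ⟨⟨p', a'⟩, t'⟩ | x' <;>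
    rcases b'' with ⟨⟨p'', a''⟩, t''⟩ | x'' <;> simp only [BRel]
  · rintro ⟨h1, h2, h3⟩ ⟨k1, k2, k3⟩
    exact ⟨h1.trans k1, h2.trans k2, TEquiv_trans _ _ _ h3 k3⟩
  all_goals first | exact fun a b => a.elim | exact fun a b => b.elim | exact Eq.trans

theorem qk_eq {s t : Tree d} : qk s = qk t ↔ TEquiv s t := by
  have he : Equivalence (@TEquiv d) :=
    ⟨TEquiv_refl, fun {a b} h => TEquiv_symm a b h, fun {a b c} h h' => TEquiv_trans a b c h h'⟩
  exact he.quot_mk_eq_iff s t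

theorem qk_qout (c : QTree d) : qk (qout c) = c := (Quot.exists_rep c).choose_spec

/-! fuel -/

def SB : Branch d → ℕ
  | Sum.inl (_, t) => Sfac t
  | Sum.inr _ => 1

theorem SfacN_stable (n m : ℕ) (t : Tree d) (h : sizeOf t ≤ n) (h' : sizeOf t ≤ m) :
    SfacN n t = SfacN m t := by
  induction n generalizing m t with
  | zero => obtain ⟨l, g, k, v, bs⟩ := t; simp at h
  | succ n ih =>
    obtain ⟨l, g, k, v, bs⟩ := t
    cases m with
    | zero => simp at h'
    | succ m =>
      rw [SfacN, SfacN]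
      congr 2
      refine List.map_congr_left fun b hb => ?_
      rcases b with ⟨pa, t⟩ | x
      · have := sizeOf_child (l := l) (g := g) (k := k) (v := v) hb
        exact ih m t (by omega) (by omega)
      · rfl

theorem Sfac_node (l g : Bool) (k : Multi d) (v : Bool) (bs : List (Branch d)) :
    Sfac (.node l g k v bs) = mfact k *
        Nat.card {e : Equiv.Perm (Fin bs.length) //
          ∀ i, BRel TEquiv (bs.get (e i)) (bs.get i)} * (bs.map SB).prod := by
  unfold Sfac
  obtain ⟨n, hn⟩ : ∃ n, sizeOf (Tree.node l g k v bs) = n + 1 :=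
    ⟨sizeOf (Tree.node l g k v bs) - 1, by simp; omega⟩
  rw [hn, SfacN]
  congr 2
  refine List.map_congr_left fun b hb => ?_
  rcases b with ⟨pa, t⟩ | x
  · have := sizeOf_child (l := l) (g := g) (k := k) (v := v) hb
    exact SfacN_stable _ _ t (by omega) le_rfl
  · rfl

theorem Sfac_nd (l g : Bool) (k : Multi d) (v : Bool) {n : ℕ} (f : Fin n → Branch d) :
    Sfac (nd l g k v f) = mfact k *
        Nat.card {e : Equiv.Perm (Fin n) // ∀ i, BRel TEquiv (f (e i)) (f i)} *
          ∏ i, SB (f i) := by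
  unfold nd
  rw [Sfac_node, List.map_ofFn, List.prod_ofFn]
  congr 2
  have hn : (List.ofFn f).length = n := List.length_ofFn
  refine Nat.card_congr (Equiv.subtypeEquiv ((finCongr hn).permCongr) fun e => ?_)
  constructor
  · intro h i
    have := h ((finCongr hn).symm i)
    simp at this ⊢
    exact this
  · intro h i
    have := h ((finCongr hn) i)
    simp at this ⊢
    exact this

theorem Sfac_pos (t : Tree d) : 0 < Sfac t := by
  induction t using ind with
  | H l g k v n f ih =>
    rw [Sfac_nd]
    refine Nat.mul_pos (Nat.mul_pos ?_ ?_) ?_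
    · exact Finset.prod_pos fun i _ => Nat.factorial_pos _
    · rw [Nat.card_pos_iff]
      refine ⟨⟨1, fun i => ?_⟩, inferInstance⟩
      rcases h : f i with ⟨⟨p, a⟩, t⟩ | x
      · simp [BRel, h, TEquiv_refl]
      · simp [BRel, h]
    · refine Finset.prod_pos fun i _ => ?_
      rcases h : f i with ⟨⟨p, a⟩, t⟩ | x
      · exact ih i _ _ h
      · simp [SB]

def swB : Branch d → List (Branch d)
  | Sum.inl ((false, a), t) => intPB a t :: (switches t).map (intB a)
  | _ => []

theorem switchesN_stable (n m : ℕ) (t : Tree d) (h : sizeOf t ≤ n) (h' : sizeOf t ≤ m) :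
    switchesN n t = switchesN m t := by
  induction n generalizing m t with
  | zero => obtain ⟨l, g, k, v, bs⟩ := t; simp at h
  | succ n ih =>
    obtain ⟨l, g, k, v, bs⟩ := t
    cases m with
    | zero => simp at h'
    | succ m =>
      rw [switchesN, switchesN]
      refine List.flatMap_congr fun i _ => ?_
      have hb := List.get_mem bs i
      rcases hh : bs.get i with ⟨⟨p, a⟩, t⟩ | x
      · rw [hh] at hb
        have := sizeOf_child (l := l) (g := g) (k := k) (v := v) hb
        cases p
        · simp only [ih m t (by omega) (by omega)]
        · rfl
      · rfl

theorem switches_node (l g : Bool) (k : Multi d) (v : Bool) (bs : List (Branch d)) :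
    switches (.node l g k v bs) = (List.finRange bs.length).flatMap fun i =>
      (swB (bs.get i)).map fun b => .node l g k v (bs.set i.1 b) := by
  unfold switches
  obtain ⟨n, hn⟩ : ∃ n, sizeOf (Tree.node l g k v bs) = n + 1 :=
    ⟨sizeOf (Tree.node l g k v bs) - 1, by simp; omega⟩
  rw [hn, switchesN]
  refine List.flatMap_congr fun i _ => ?_
  have hb := List.get_mem bs i
  rcases hh : bs.get i with ⟨⟨p, a⟩, t⟩ | x
  · rw [hh] at hb
    have := sizeOf_child (l := l) (g := g) (k := k) (v := v) hb
    cases p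
    · simp [swB, switches, switchesN_stable n (sizeOf t) t (by omega) le_rfl]
    · rfl
  · rfl

theorem set_ofFn {α : Type*} {n : ℕ} (f : Fin n → α) (i : Fin n) (b : α) :
    (List.ofFn f).set i.1 b = List.ofFn (Function.update f i b) := by
  apply List.ext_getElem
  · simp
  · intro j h1 h2
    simp [List.getElem_set, Function.update_apply, Fin.ext_iff, eq_comm]

theorem switches_nd (l g : Bool) (k : Multi d) (v : Bool) {n : ℕ} (f : Fin n → Branch d) :
    switches (nd l g k v f) = (List.finRange n).flatMap fun i =>
      (swB (f i)).map fun b => nd l g k v (Function.update f i b) := by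
  have hn : (List.ofFn f).length = n := List.length_ofFn
  have key : ∀ (m : ℕ) (h : m = n) (F : Fin m → List (Tree d)) (G : Fin n → List (Tree d)),
      (∀ i, F i = G (Fin.cast h i)) → (List.finRange m).flatMap F = (List.finRange n).flatMap G := by
    rintro m rfl F G h
    exact List.flatMap_congr fun i _ => h i
  rw [nd, switches_node]
  refine key _ hn _ _ fun i => ?_
  have : (i : ℕ) = ((Fin.cast hn i : Fin n) : ℕ) := rfl
  simp only [List.get_ofFn, this, set_ofFn]
  rfl

theorem IsT0_nd {l g : Bool} {k : Multi d} {v : Bool} {n : ℕ} {f : Fin n → Branch d}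
    (h : IsT0 (nd l g k v f)) : g = false ∧ k = 0 ∧ ∀ i, ∃ a t, f i = intB a t ∧ IsT0 t := by
  obtain ⟨N, h⟩ := h
  cases N with
  | zero => simp [ShapeN] at h
  | succ N =>
    rw [nd, ShapeN] at h
    obtain ⟨h1, h2, h3⟩ := h
    refine ⟨by simpa using h1, by simpa using h2, fun i => ?_⟩
    have := h3 (f i) (by simp)
    simp only [Bool.false_eq_true, false_and, or_false, false_or] at this
    obtain ⟨p, a, t, hf, hp, hs⟩ := this
    subst hp
    exact ⟨a, t, hf, N, hs⟩

def I (s t : Tree d) : ℕ := if TEquiv s t then Sfac t else 0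
def BI (b b' : Branch d) : ℕ := if BRel TEquiv b b' then SB b' else 0

theorem I_nd {l g : Bool} {k : Multi d} {v : Bool} {n m : ℕ} {f : Fin n → Branch d}
    {l' g' : Bool} {k' : Multi d} {v' : Bool} {f' : Fin m → Branch d} :
    I (nd l g k v f) (nd l' g' k' v' f') =
      (if l = l' ∧ g = g' ∧ k = k' ∧ v = v' then mfact k' else 0) *
        ∑ e : Fin n ≃ Fin m, ∏ i, BI (f i) (f' (e i)) := by
  have h1 : ∀ e : Fin n ≃ Fin m, ∏ i, BI (f i) (f' (e i)) =
      if ∀ i, BRel TEquiv (f i) (f' (e i)) then ∏ j, SB (f' j) else 0 := by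
    intro e
    unfold BI
    rw [Finset.prod_ite_zero, Equiv.prod_comp e (fun j => SB (f' j))]
    simp
  simp_rw [h1]
  rw [← Finset.sum_filter, Finset.sum_const, smul_eq_mul, ← Fintype.card_subtype,
    ← Nat.card_eq_fintype_card]
  unfold I
  by_cases hl : l = l' ∧ g = g' ∧ k = k' ∧ v = v'
  · rw [if_pos hl]
    by_cases hE : ∃ e : Fin n ≃ Fin m, ∀ i, BRel TEquiv (f i) (f' (e i))
    · rw [if_pos (TEquiv_nd.2 ⟨hl.1, hl.2.1, hl.2.2.1, hl.2.2.2, hE⟩), Sfac_nd, mul_assoc]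
      congr 2
      obtain ⟨e0, he0⟩ := hE
      symm
      refine Nat.card_congr (Equiv.subtypeEquiv (Equiv.equivCongr e0 (Equiv.refl _)) fun e => ?_)
      constructor
      · intro h i
        have a := h (e0.symm i)
        have b := he0 (e0.symm i)
        rw [Equiv.apply_symm_apply] at b
        exact BRel_trans (BRel_symm a) b
      · intro h i
        have a := h (e0 i)
        simp at a
        exact BRel_trans (he0 i) (BRel_symm a)
    · rw [if_neg (fun h => hE (TEquiv_nd.1 h).2.2.2.2)]
      have : IsEmpty {e : Fin n ≃ Fin m // ∀ i, BRel TEquiv (f i) (f' (e i))} :=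
        ⟨fun e => hE ⟨e.1, e.2⟩⟩
      simp
  · rw [if_neg hl, if_neg, zero_mul]
    intro h
    have := TEquiv_nd.1 h
    exact hl ⟨this.1, this.2.1, this.2.2.1, this.2.2.2.1⟩

theorem sum_switches_nd {R : Type*} [AddCommMonoid R] (l g : Bool) (k : Multi d) (v : Bool) {n : ℕ}
    (f : Fin n → Branch d) (F : Tree d → R) :
    ((switches (nd l g k v f)).map F).sum =
      ∑ i, ((swB (f i)).map fun b => F (nd l g k v (Function.update f i b))).sum := by
  rw [switches_nd, Fin.sum_univ_def]
  induction List.finRange n with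
  | nil => simp
  | cons a L ih => simp [ih, Function.comp_def]

theorem list_sum_swap {ι β : Type*} [Fintype ι] (L : List β) (c : ℕ) (A : ι → ℕ) (h : β → ι → ℕ) :
    (L.map fun b => c * ∑ e, h b e * A e).sum = c * ∑ e, (L.map fun b => h b e).sum * A e := by
  induction L with
  | nil => simp
  | cons a L ih => simp [ih, add_mul, Finset.sum_add_distrib, mul_add]

theorem prod_update {n : ℕ} (f : Fin n → Branch d) (i : Fin n) (b : Branch d)
    (G : Fin n → Branch d) :
    ∏ j, BI (Function.update f i b j) (G j) =
      BI b (G i) * ∏ j ∈ Finset.univ.erase i, BI (f j) (G j) := by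
  rw [← Finset.mul_prod_erase Finset.univ _ (Finset.mem_univ i), Function.update_self]
  congr 1
  refine Finset.prod_congr rfl fun j hj => ?_
  rw [Function.update_of_ne (Finset.ne_of_mem_erase hj)]

theorem mem_switches_nd {l g : Bool} {k : Multi d} {v : Bool} {n : ℕ} {f : Fin n → Branch d}
    {σ : Tree d} (h : σ ∈ switches (nd l g k v f)) :
    ∃ i, ∃ X ∈ swB (f i), σ = nd l g k v (Function.update f i X) := by
  rw [switches_nd, List.mem_flatMap] at h
  obtain ⟨i, _, h⟩ := h
  rw [List.mem_map] at h
  obtain ⟨X, hX, h⟩ := h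
  exact ⟨i, X, hX, h.symm⟩

theorem branch_step {a a0 : Multi d} {t t0 : Tree d} {X : Branch d} (hX : X ∈ swB (intB a0 t0))
    (H : ∀ σ ∈ switches t0, ¬ TEquiv t σ ∧ ((switches t).map (fun s => I s σ)).sum = I t t0) :
    ¬ BRel TEquiv (intB a t) X ∧
      ((swB (intB a t)).map fun b => BI b X).sum = BI (intB a t) (intB a0 t0) := by
  simp only [swB, intB, List.mem_cons, List.mem_map] at hX
  rcases hX with rfl | ⟨σ, hσ, rfl⟩
  · constructor
    · simp [BRel, intB, intPB]
    · have : ∀ L : List (Tree d), ((L.map (intB a)).map fun b => BI b (intPB a0 t0)).sum = 0 := by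
        intro L
        induction L with
        | nil => simp
        | cons s L ih =>
          rw [List.map_cons, List.map_cons, List.sum_cons, ih]
          simp [BI, BRel, intB, intPB]
      simp only [swB, intB, List.map_cons, List.sum_cons] at this ⊢
      erw [this]
      simp [BI, BRel, intPB, SB]
  · obtain ⟨h1, h2⟩ := H σ hσ
    constructor
    · simp only [BRel, intB]
      exact fun h => h1 h.2.2
    · have key : ∀ s s0 : Tree d, BI (intB a s) (intB a0 s0) = if a = a0 then I s s0 else 0 := by
        intro s s0
        simp only [BI, I, intB, BRel, SB, true_and]
        by_cases ha : a = a0 <;> simp [ha]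
      have h0 : BI (intPB a t) (intB a0 σ) = 0 := by simp [BI, BRel, intB, intPB]
      have e1 : swB (intB a t) = intPB a t :: (switches t).map (intB a) := rfl
      rw [e1, List.map_cons, List.sum_cons]
      have e2 : (Sum.inl ((false, a0), σ) : Branch d) = intB a0 σ := rfl
      simp only [e2, h0, zero_add, List.map_map, Function.comp_def, key]
      by_cases ha : a = a0
      · simp [ha, h2]
      · simp [ha]

theorem main_tree (t0 : Tree d) : IsT0 t0 → ∀ t, IsT0 t → ∀ σ ∈ switches t0,
    ¬ TEquiv t σ ∧ ((switches t).map (fun s => I s σ)).sum = I t t0 := by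
  induction t0 using ind with
  | H l0 g0 k0 v0 m f0 ih =>
    intro h0 t ht σ hσ
    obtain ⟨l, g, k, v, bs⟩ := t
    rw [node_eq_nd] at ht ⊢
    generalize bs.get = f at *
    generalize bs.length = n at *
    obtain ⟨j, X, hX, rfl⟩ := mem_switches_nd hσ
    obtain ⟨hg, hk, hf⟩ := IsT0_nd ht
    obtain ⟨hg0, hk0, hf0⟩ := IsT0_nd h0
    have key : ∀ i, ¬ BRel TEquiv (f i) X ∧
        ((swB (f i)).map fun b => BI b X).sum = BI (f i) (f0 j) := by
      intro i
      obtain ⟨a, t, hft, htt⟩ := hf i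
      obtain ⟨a0, t0, hft0, htt0⟩ := hf0 j
      rw [hft, hft0]
      rw [hft0] at hX
      exact branch_step hX (ih j _ _ hft0 htt0 t htt)
    constructor
    · intro h
      obtain ⟨-, -, -, -, e, he⟩ := TEquiv_nd.1 h
      have := he (e.symm j)
      rw [Equiv.apply_symm_apply, Function.update_self] at this
      exact (key _).1 this
    · rw [sum_switches_nd, I_nd]
      simp_rw [I_nd]
      have hp : ∀ (i : Fin n) (b : Branch d) (e : Fin n ≃ Fin m),
          ∏ x, BI (Function.update f i b x) (Function.update f0 j X (e x)) =
          BI b (Function.update f0 j X (e i)) *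
            ∏ x ∈ Finset.univ.erase i, BI (f x) (Function.update f0 j X (e x)) :=
        fun i b e => prod_update f i b (fun x => Function.update f0 j X (e x))
      simp_rw [hp, list_sum_swap]
      rw [← Finset.mul_sum, Finset.sum_comm]
      congr 1
      refine Finset.sum_congr rfl fun e _ => ?_
      rw [Finset.sum_eq_single (e.symm j)]
      · rw [Equiv.apply_symm_apply, Function.update_self, (key _).2,
          ← Finset.mul_prod_erase Finset.univ _ (Finset.mem_univ (e.symm j)),
          Equiv.apply_symm_apply]
        congr 1
        refine Finset.prod_congr rfl fun x hx => ?_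
        rw [Function.update_of_ne]
        intro h
        exact (Finset.ne_of_mem_erase hx) (by simp [← h])
      · intro i _ hi
        rw [Finset.prod_eq_zero (i := e.symm j) (by simp [Ne.symm hi]), mul_zero]
        rw [Equiv.apply_symm_apply, Function.update_self, BI, if_neg (key _).1]
      · simp

theorem zip_specs (L : List (Multi d × Tree d)) : ∀ cs : List (QTree d), cs.length = L.length →
    (List.zipWith BSpec.coeff (specsOf L) cs).prod =
      if cs = L.map (fun p => qk p.2) then 1 else 0 := by
  induction L with
  | nil => intro cs h; simp at h; simp [h, specsOf]
  | cons p L ih =>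
    intro cs h
    cases cs with
    | nil => simp at h
    | cons c cs =>
      have := ih cs (by simpa using h)
      simp only [specsOf, List.map_cons, List.zipWith_cons_cons, List.prod_cons,
        List.cons.injEq] at this ⊢
      rw [this]
      by_cases h1 : c = qk p.2 <;> simp [BSpec.coeff, dqT, h1]

theorem zip_branch (L : List (Multi d × Tree d)) :
    List.zipWith BSpec.toBranch (specsOf L) (L.map (fun p => qk p.2)) =
      L.map (fun p => intB p.1 (qout (qk p.2))) := by
  induction L with
  | nil => simp [specsOf]
  | cons p L ih =>
    simp only [specsOf, List.map_cons, List.zipWith_cons_cons] at ih ⊢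
    rw [ih]
    rfl

theorem qk_mk0_qout (l v : Bool) (L : List (Multi d × Tree d)) :
    qk (Tree.node l false 0 v (L.map (fun p => intB p.1 (qout (qk p.2))))) = qk (mk0 l v L) := by
  rw [qk_eq, mk0, TEquiv_node]
  refine ⟨rfl, rfl, rfl, rfl, finCongr (by simp), fun i => ?_⟩
  have hi : i.1 < L.length := by simpa using i.2
  have h1 : (L.map (fun p => intB p.1 (qout (qk p.2)))).get i =
      intB L[i.1].1 (qout (qk L[i.1].2)) := by simp
  have h2 : ∀ j : Fin (L.map (fun p => intB p.1 p.2)).length, j.1 = i.1 →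
      (L.map (fun p => intB p.1 p.2)).get j = intB L[i.1].1 L[i.1].2 := by
    intro j hj
    simp [hj]
  rw [h1, h2 _ rfl]
  exact ⟨rfl, rfl, qk_eq.1 (qk_qout _)⟩

def nTerm (l v : Bool) (x : QTree d) (specs : List (BSpec d)) (cs : List (QTree d)) : ℝ :=
  if cs.length = specs.length then
      (List.zipWith BSpec.coeff specs cs).prod *
        dqT (Tree.node l false 0 v (List.zipWith BSpec.toBranch specs cs)) x
    else 0

theorem nTerm_specsOf (l v : Bool) (x : QTree d) (L : List (Multi d × Tree d))
    (cs : List (QTree d)) :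
    nTerm l v x (specsOf L) cs =
      if cs = L.map (fun p => qk p.2) then dqT (mk0 l v L) x else 0 := by
  unfold nTerm
  by_cases h : cs.length = L.length
  · rw [if_pos (by simpa [specsOf] using h), zip_specs L cs h]
    by_cases h' : cs = L.map (fun p => qk p.2)
    · rw [if_pos h', if_pos h', h', zip_branch, one_mul, dqT, dqT, qk_mk0_qout]
    · rw [if_neg h', if_neg h', zero_mul]
  · rw [if_neg (by simpa [specsOf] using h), if_neg]
    rintro rfl
    simp at h

theorem coeff_lin (specs : List (BSpec d)) (a : Multi d) (A B : Ser d) :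
    ∀ (i : ℕ) (_ : i < specs.length) (cs : List (QTree d)), cs.length = specs.length →
    (List.zipWith BSpec.coeff (specs.set i (BSpec.ser false a (A + B))) cs).prod =
    (List.zipWith BSpec.coeff (specs.set i (BSpec.ser false a A)) cs).prod +
    (List.zipWith BSpec.coeff (specs.set i (BSpec.ser false a B)) cs).prod := by
  induction specs with
  | nil => intro i h; simp at h
  | cons s specs ih =>
    intro i hi cs h
    cases cs with
    | nil => simp at h
    | cons c cs =>
      cases i with
      | zero => simp [BSpec.coeff, add_mul]
      | succ i =>
        simp only [List.set_cons_succ, List.zipWith_cons_cons, List.prod_cons]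
        rw [ih i (by simpa using hi) cs (by simpa using h), mul_add]

theorem coeff_zero (specs : List (BSpec d)) (a : Multi d) :
    ∀ (i : ℕ) (_ : i < specs.length) (cs : List (QTree d)), cs.length = specs.length →
    (List.zipWith BSpec.coeff (specs.set i (BSpec.ser false a 0)) cs).prod = 0 := by
  induction specs with
  | nil => intro i h; simp at h
  | cons s specs ih =>
    intro i hi cs h
    cases cs with
    | nil => simp at h
    | cons c cs =>
      cases i with
      | zero => simp [BSpec.coeff]
      | succ i =>
        simp only [List.set_cons_succ, List.zipWith_cons_cons, List.prod_cons]
        rw [ih i (by simpa using hi) cs (by simpa using h), mul_zero]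

theorem branch_indep (specs : List (BSpec d)) (a : Multi d) (A B : Ser d) :
    ∀ (i : ℕ) (cs : List (QTree d)),
    List.zipWith BSpec.toBranch (specs.set i (BSpec.ser false a A)) cs =
    List.zipWith BSpec.toBranch (specs.set i (BSpec.ser false a B)) cs := by
  induction specs with
  | nil => simp
  | cons s specs ih =>
    intro i cs
    cases cs with
    | nil => simp
    | cons c cs =>
      cases i with
      | zero => simp [BSpec.toBranch]
      | succ i => simp [ih i cs]

theorem specsOf_set (L : List (Multi d × Tree d)) (i : ℕ) (a : Multi d) (s : Tree d) :
    (specsOf L).set i (BSpec.ser false a (dqT s)) = specsOf (L.set i (a, s)) := by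
  simp [specsOf, List.map_set]

theorem nodeSer_list (l v : Bool) (x : QTree d) (L : List (Multi d × Tree d)) (i : ℕ)
    (hi : i < L.length) (a : Multi d) (S : List (Tree d)) :
    nodeSer l false 0 v ((specsOf L).set i (BSpec.ser false a (S.map dqT).sum)) x =
      (S.map fun s => dqT (mk0 l v (L.set i (a, s))) x).sum ∧
    (Function.support
      (nTerm l v x ((specsOf L).set i (BSpec.ser false a (S.map dqT).sum)))).Finite := by
  have hi' : i < (specsOf L).length := by simpa [specsOf] using hi
  have hns : ∀ specs, nodeSer l false 0 v specs x = ∑ᶠ cs, nTerm l v x specs cs := fun _ => rfl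
  rw [hns]
  induction S with
  | nil =>
    have : nTerm l v x ((specsOf L).set i (BSpec.ser false a
        (([] : List (Tree d)).map dqT).sum)) = 0 := by
      funext cs
      unfold nTerm
      split_ifs with h
      · rw [List.map_nil, List.sum_nil, coeff_zero _ _ _ hi' _ (by simpa using h), zero_mul]; rfl
      · rfl
    rw [this]
    simp
  | cons s S ih =>
    have : nTerm l v x ((specsOf L).set i (BSpec.ser false a ((s :: S).map dqT).sum)) =
        nTerm l v x (specsOf (L.set i (a, s))) +
        nTerm l v x ((specsOf L).set i (BSpec.ser false a (S.map dqT).sum)) := by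
      rw [← specsOf_set]
      funext cs
      simp only [nTerm, Pi.add_apply, List.length_set]
      split_ifs with h
      · rw [List.map_cons, List.sum_cons, coeff_lin _ _ _ _ _ hi' _ h, add_mul]
        congr 3
        · rw [branch_indep]
        · rw [branch_indep]
      · simp
    have hs : Function.support (nTerm l v x (specsOf (L.set i (a, s)))) ⊆
        {(L.set i (a, s)).map (fun p => qk p.2)} := by
      intro cs h
      rw [Function.mem_support, nTerm_specsOf] at h
      by_contra h'
      exact h (if_neg h')
    have hfin := (Set.finite_singleton _).subset hs
    rw [this]
    refine ⟨?_, (hfin.union ih.2).subset (Function.support_add _ _)⟩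
    simp only [Pi.add_apply]
    rw [finsum_add_distrib hfin ih.2, ih.1, List.map_cons, List.sum_cons]
    congr 1
    rw [finsum_eq_single _ ((L.set i (a, s)).map (fun p => qk p.2)), nTerm_specsOf, if_pos rfl]
    intro cs hcs
    rw [nTerm_specsOf, if_neg hcs]

theorem list_sum_apply (S : List (Tree d)) (x : QTree d) :
    (S.map dqT).sum x = (S.map fun s => dqT s x).sum := by
  induction S with
  | nil => simp
  | cons s S ih => simp [ih]

theorem up_eq (up : QTree d → Ser d) (hup : UpEqs up) (t : Tree d) :
    IsT0 t → up (qk t) = ((switches t).map dqT).sum := by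
  induction t using ind with
  | H l g k v n f ih =>
    intro h0
    obtain ⟨rfl, rfl, hf⟩ := IsT0_nd h0
    choose a t hft ht using hf
    obtain rfl : f = fun i => intB (a i) (t i) := funext hft
    have hmk : ∀ p : Fin n → Multi d × Tree d,
        mk0 l v (List.ofFn p) = nd l false 0 v (fun i => intB (p i).1 (p i).2) := by
      intro p
      rw [mk0, nd, List.map_ofFn]
      rfl
    have H := hup l v (List.ofFn fun i => (a i, t i)) (by
      intro p hp
      rw [List.mem_ofFn] at hp
      obtain ⟨i, rfl⟩ := hp
      exact ht i)
    rw [hmk] at H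
    rw [H]
    have hn : (List.ofFn fun i => (a i, t i)).length = n := List.length_ofFn
    have ih' : ∀ i, up (qk (t i)) = ((switches (t i)).map dqT).sum :=
      fun i => ih i _ _ rfl (ht i)
    rw [sum_switches_nd, ← Finset.sum_add_distrib]
    refine Fintype.sum_equiv (finCongr hn) _ _ fun i => ?_
    obtain ⟨i, rfl⟩ := (finCongr hn).symm.surjective i
    rw [Equiv.apply_symm_apply]
    have hg : (List.ofFn fun i => (a i, t i)).get ((finCongr hn).symm i) = (a i, t i) := by
      simp
    have hv : (((finCongr hn).symm i : Fin _) : ℕ) = i.1 := rfl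
    rw [hg, hv, ih' i]
    have e1 : swB (intB (a i) (t i)) = intPB (a i) (t i) :: (switches (t i)).map (intB (a i)) := rfl
    rw [e1, List.map_cons, List.sum_cons, List.map_ofFn, set_ofFn]
    congr 1
    funext x
    rw [(nodeSer_list l v x _ i.1 (by simp) (a i) (switches (t i))).1]
    simp only [set_ofFn, hmk]
    have e2 : ∀ s, (fun j => intB (Function.update (fun i => (a i, t i)) i (a i, s) j).1
        (Function.update (fun i => (a i, t i)) i (a i, s) j).2) =
        Function.update (fun i => intB (a i) (t i)) i (intB (a i) s) := by
      intro s
      funext j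
      by_cases hj : j = i
      · subst hj; simp
      · simp [Function.update_of_ne hj]
    simp only [e2]
    have e3 : ∀ (S : List (Tree d)) (F : Tree d → Tree d),
        (S.map fun s => dqT (F s) x).sum = (S.map fun s => dqT (F s)).sum x := by
      intro S F
      induction S with
      | nil => simp
      | cons s S ih => simp [ih]
    rw [e3, List.map_map]
    rfl

end Tree

/-- For every `τ ∈ T_0` one has
`↑_μ τ = Σ_i (S(τ)/S(τ_i)) τ_i`, where the `τ_i` are the pairwise distinct
(non-planar) trees of the form `↑_μ^e τ`, `e ∈ E_τ`: equivalently, every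
distinct tree `σ` of the form `↑_μ^e τ` occurs in `↑_μ τ` with integer
coefficient exactly `S(τ)/S(σ)`, and no other tree occurs. -/
theorem abstract_derivative_coefficients {d : ℕ}
    (up : QTree d → Ser d) (hup : UpEqs up) :
    ∀ t : Tree d, Tree.IsT0 t →
      (∀ σ ∈ Tree.switches t,
        Tree.Sfac σ ∣ Tree.Sfac t ∧
          up (qk t) (qk σ) = (Tree.Sfac t : ℝ) / (Tree.Sfac σ : ℝ)) ∧
      (∀ c : QTree d, (∀ σ ∈ Tree.switches t, qk σ ≠ c) → up (qk t) c = 0) := by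
  intro t ht
  rw [Tree.up_eq up hup t ht]
  constructor
  · intro σ hσ
    have h := (Tree.main_tree t ht t ht σ hσ).2
    have hI : Tree.I t t = Tree.Sfac t := if_pos (Tree.TEquiv_refl t)
    rw [hI] at h
    have key : ∀ S : List (Tree d), ∃ N : ℕ, (S.map fun s => Tree.I s σ).sum = N * Tree.Sfac σ ∧
        (S.map dqT).sum (qk σ) = N := by
      intro S
      induction S with
      | nil => exact ⟨0, by simp⟩
      | cons s S ih =>
        obtain ⟨N, h1, h2⟩ := ih
        by_cases hs : Tree.TEquiv s σ
        · refine ⟨N + 1, ?_, ?_⟩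
          · rw [List.map_cons, List.sum_cons, h1, Tree.I, if_pos hs]
            ring
          · rw [List.map_cons, List.sum_cons, Pi.add_apply, h2, dqT,
              if_pos (Tree.qk_eq.2 hs).symm]
            push_cast
            ring
        · refine ⟨N, ?_, ?_⟩
          · rw [List.map_cons, List.sum_cons, h1, Tree.I, if_neg hs, zero_add]
          · rw [List.map_cons, List.sum_cons, Pi.add_apply, h2, dqT,
              if_neg (fun h => hs (Tree.qk_eq.1 h.symm)), zero_add]
    obtain ⟨N, h1, h2⟩ := key (Tree.switches t)
    rw [h] at h1
    refine ⟨⟨N, by rw [h1, mul_comm]⟩, ?_⟩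
    rw [h2, h1]
    have := Tree.Sfac_pos σ
    field_simp
    push_cast
    ring
  · intro c hc
    rw [Tree.list_sum_apply]
    apply List.sum_eq_zero
    intro y hy
    rw [List.mem_map] at hy
    obtain ⟨s, hs, rfl⟩ := hy
    exact if_neg (fun h => hc s hs h.symm)

end Flow
end
end
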